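/- arXiv:1805.02419 — 5 statements merged into one kernel-verified Lean document; each statement's English description precedes it below -/
import Mathlib

section
/- Let n ≥ 2, μ ∈ ℝ, α ∈ ℝ, let φ : (0,∞) → ℝ be C² and positive, and let β, γ : (0,∞) → ℝ be C¹. Suppose (φ, β, γ) satisfy (ODE1) and (ODE2) for all r > 0. Define A(x) = α·I + i(β(|x|) ν⊗ν + γ(|x|)(I − ν⊗ν)) and w(x) = φ(|x|)·(x₁/|x|)·e^{−i log|x|}. Then for all x ≠ 0, div(A∇w)(x) = (1/2)(i·w(x) + μ·w(x) + x·∇w(x)). -/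
/-!
Write `r = ‖x‖` and `e(r) = exp (-i log r)`, so that `w = g(r) x₁` with `g(r) = φ(r) e(r) / r`. Then
`∂ₗ w = g'(r) xₗ x₁ / r + g(r) δ₁ₗ`, and since `∑ xₗ ∂ₗ w = (r g' + g) x₁`, the flux is
`(A ∇w)ₖ = a(r) xₖ x₁ + b(r) δ₁ₖ` with `b = (α + iγ) g` and
`a = (α + iγ) g' / r + i (β - γ)(r g' + g) / r²` (`flux_eq`). The divergence of such a field is
`(r a' + (n + 1) a + b' / r) x₁` (`sum_fderiv_flux`), in which the terms with `γ'` cancel. Both sides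
of the equation are therefore `e(r) x₁` times radial functions with explicit real and imaginary parts.
The real part is (ODE1) divided by `r ^ (n - 1) φ`, the imaginary part is (ODE2); `ode1_expand` and
`ode2_expand` carry out the derivatives in these equations and divide out the powers of `r`.
-/

open scoped BigOperators

noncomputable section

/-- The `k`-th partial derivative of `w : ℝⁿ → ℂ`. -/
def pdC {n : ℕ} (w : EuclideanSpace ℝ (Fin n) → ℂ) (x : EuclideanSpace ℝ (Fin n))
    (k : Fin n) : ℂ :=
  fderiv ℝ w x (EuclideanSpace.single k 1)

/-- `div(A ∇w)(x) = ∑ₖ ∂ₖ (∑ₗ A_{kl} ∂ₗ w)(x)`. -/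
def divAgrad {n : ℕ} (A : EuclideanSpace ℝ (Fin n) → Matrix (Fin n) (Fin n) ℂ)
    (w : EuclideanSpace ℝ (Fin n) → ℂ) (x : EuclideanSpace ℝ (Fin n)) : ℂ :=
  ∑ k, fderiv ℝ (fun y => ∑ l, A y k l * pdC w y l) x (EuclideanSpace.single k 1)

/-! ### Derivatives of radial functions, fluxes and divergences -/

lemma hasFDerivAt_radial {n : ℕ} {g : ℝ → ℂ} {g' : ℂ} {x : EuclideanSpace ℝ (Fin n)}
    (hx : x ≠ 0) (hg : HasDerivAt g g' ‖x‖) :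
    ∃ L : EuclideanSpace ℝ (Fin n) →L[ℝ] ℂ, HasFDerivAt (fun y => g ‖y‖) L x ∧
      ∀ k, L (EuclideanSpace.single k 1) = g' * ((x k : ℂ) / (‖x‖ : ℂ)) := by
  have hr : ‖x‖ ≠ 0 := norm_ne_zero_iff.mpr hx
  have h1 : HasFDerivAt (fun y : EuclideanSpace ℝ (Fin n) => ‖y‖ ^ 2) (2 • innerSL ℝ x) x :=
    (hasStrictFDerivAt_norm_sq x).hasFDerivAt
  have h2 := h1.sqrt (by positivity)
  simp only [Real.sqrt_sq (norm_nonneg _)] at h2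
  have h3 := hg.hasFDerivAt.comp x h2
  refine ⟨_, h3, fun k => ?_⟩
  simp [EuclideanSpace.inner_single_right]
  field_simp

lemma hasFDerivAt_coord {n : ℕ} (i : Fin n) (x : EuclideanSpace ℝ (Fin n)) :
    ∃ L : EuclideanSpace ℝ (Fin n) →L[ℝ] ℂ, HasFDerivAt (fun y => ((y i : ℝ) : ℂ)) L x ∧
      ∀ k, L (EuclideanSpace.single k 1) = if i = k then 1 else 0 := by
  refine ⟨Complex.ofRealCLM.comp (EuclideanSpace.proj i), ?_, fun k => ?_⟩
  · exact (Complex.ofRealCLM.comp (EuclideanSpace.proj i)).hasFDerivAt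
  · by_cases h : i = k <;> simp [h]

lemma sum_coord_sq {n : ℕ} (x : EuclideanSpace ℝ (Fin n)) :
    ∑ k, (x k : ℂ) * (x k : ℂ) = (‖x‖ : ℂ) ^ 2 := by
  have h := EuclideanSpace.real_norm_sq_eq x
  rw [← Complex.ofReal_pow, h]
  push_cast
  simp only [sq]

lemma pdC_radial_mul_coord {n : ℕ} {g : ℝ → ℂ} {g' : ℂ} {x : EuclideanSpace ℝ (Fin n)}
    (hx : x ≠ 0) (hg : HasDerivAt g g' ‖x‖) (i k : Fin n) :
    pdC (fun y => g ‖y‖ * ((y i : ℝ) : ℂ)) x k =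
      g' * ((x k : ℂ) / (‖x‖ : ℂ)) * x i + g ‖x‖ * (if i = k then 1 else 0) := by
  obtain ⟨L, hL, hLk⟩ := hasFDerivAt_radial hx hg
  obtain ⟨M, hM, hMk⟩ := hasFDerivAt_coord i x
  rw [pdC, (hL.fun_mul hM).fderiv]
  simp [hLk, hMk]
  ring

/-- The divergence of the field `a(r) xᵢ x + b(r) eᵢ`. -/
lemma sum_fderiv_flux {n : ℕ} {a b : ℝ → ℂ} {a' b' : ℂ} {x : EuclideanSpace ℝ (Fin n)}
    (hx : x ≠ 0) (ha : HasDerivAt a a' ‖x‖) (hb : HasDerivAt b b' ‖x‖) (i : Fin n) :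
    ∑ k, fderiv ℝ (fun y : EuclideanSpace ℝ (Fin n) =>
        a ‖y‖ * (y i : ℂ) * (y k : ℂ) + b ‖y‖ * (if i = k then 1 else 0)) x
        (EuclideanSpace.single k 1) =
      (a' * ‖x‖ + (n + 1) * a ‖x‖ + b' / ‖x‖) * x i := by
  have hr : (‖x‖ : ℂ) ≠ 0 := by exact_mod_cast norm_ne_zero_iff.mpr hx
  obtain ⟨L, hL, hLk⟩ := hasFDerivAt_radial hx ha
  obtain ⟨N, hN, hNk⟩ := hasFDerivAt_radial hx hb
  obtain ⟨M, hM, hMk⟩ := hasFDerivAt_coord i x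
  have key : ∀ k, fderiv ℝ (fun y : EuclideanSpace ℝ (Fin n) =>
        a ‖y‖ * (y i : ℂ) * (y k : ℂ) + b ‖y‖ * (if i = k then 1 else 0)) x
        (EuclideanSpace.single k 1) =
      a' / ‖x‖ * x i * ((x k : ℂ) * x k) + a ‖x‖ * x i
        + (if i = k then (a ‖x‖ * x k + b' * (x k / ‖x‖)) else 0) := by
    intro k
    obtain ⟨K, hK, hKk⟩ := hasFDerivAt_coord k x
    rw [(((hL.fun_mul hM).fun_mul hK).fun_add (hN.mul_const (if i = k then (1 : ℂ) else 0))).fderiv]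
    simp only [add_apply, smul_apply, smul_eq_mul,
      hLk, hMk, hKk, hNk, if_true]
    split_ifs <;> ring
  simp_rw [key]
  rw [Finset.sum_add_distrib, Finset.sum_add_distrib, ← Finset.mul_sum, sum_coord_sq]
  simp
  field_simp
  ring

/-- The flux `A ∇w` for `A = α + i (β ν⊗ν + γ (1 - ν⊗ν))` and `w = g(r) xᵢ`, with `p` the value of
`g'(r)` and `q` that of `g(r)`. -/
lemma flux_eq {n : ℕ} (α β γ : ℝ) (p q : ℂ) {x : EuclideanSpace ℝ (Fin n)} (hx : x ≠ 0)
    (i k : Fin n) :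
    ∑ l, ((α : ℂ) * (if k = l then 1 else 0) +
        Complex.I * ((β * (x k * x l / ‖x‖ ^ 2) +
          γ * ((if k = l then (1 : ℝ) else 0) - x k * x l / ‖x‖ ^ 2) : ℝ) : ℂ)) *
      (p * ((x l : ℂ) / (‖x‖ : ℂ)) * x i + q * (if i = l then 1 else 0)) =
    ((α + Complex.I * γ) * p / ‖x‖ + Complex.I * (β - γ) * (p * ‖x‖ + q) / ‖x‖ ^ 2) * x i * x k
      + (α + Complex.I * γ) * q * (if i = k then 1 else 0) := by
  have hr : (‖x‖ : ℂ) ≠ 0 := by exact_mod_cast norm_ne_zero_iff.mpr hx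
  have key : ∀ l, ((α : ℂ) * (if k = l then 1 else 0) +
        Complex.I * ((β * (x k * x l / ‖x‖ ^ 2) +
          γ * ((if k = l then (1 : ℝ) else 0) - x k * x l / ‖x‖ ^ 2) : ℝ) : ℂ)) *
      (p * ((x l : ℂ) / (‖x‖ : ℂ)) * x i + q * (if i = l then 1 else 0)) =
      (if k = l then (α + Complex.I * γ) *
          (p * ((x l : ℂ) / (‖x‖ : ℂ)) * x i + q * (if i = l then 1 else 0)) else 0)
      + Complex.I * (β - γ) * x k / ‖x‖ ^ 2 * (p / ‖x‖ * x i) * ((x l : ℂ) * x l)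
      + (if i = l then Complex.I * (β - γ) * x k / ‖x‖ ^ 2 * q * x l else 0) := by
    intro l
    push_cast
    split_ifs <;> push_cast <;> ring
  simp_rw [key]
  rw [Finset.sum_add_distrib, Finset.sum_add_distrib, ← Finset.mul_sum, sum_coord_sq]
  simp only [Finset.sum_ite_eq, Finset.mem_univ, if_true]
  field_simp
  ring

lemma hasDerivAt_phase {r : ℝ} (hr : 0 < r) :
    HasDerivAt (fun s : ℝ => Complex.exp (-Complex.I * (Real.log s : ℂ)))
      (-Complex.I / r * Complex.exp (-Complex.I * (Real.log r : ℂ))) r := by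
  have h := (((Real.hasDerivAt_log hr.ne').ofReal_comp).const_mul (-Complex.I)).cexp
  convert h using 1
  push_cast
  ring

/-! ### The two ODEs with derivatives expanded -/

/-- (ODE1) with its derivatives carried out, divided by `r ^ (n - 1) φ`. Here `ψ` is `φ'`. -/
lemma ode1_expand {n μ α r p1 p2 b1 : ℝ} {φ ψ β : ℝ → ℝ} (hr : 0 < r) (hpos : 0 < φ r)
    (hψr : ψ r = p1) (hφ : HasDerivAt φ p1 r) (hψ : HasDerivAt ψ p2 r) (hβ : HasDerivAt β b1 r)
    (h : deriv (fun s => s ^ (n - 2) * β s * (φ s) ^ 2) r =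
        r ^ (n - 1) * φ r *
          ((1 / 2) * (μ * φ r + r * p1) + n * α * φ r / r ^ 2 -
            α * deriv (fun s => s ^ (n - 1) * ψ s) r / r ^ (n - 1))) :
    (n - 2) * β r * φ r / r ^ 2 + b1 * φ r / r + 2 * β r * p1 / r =
      (1 / 2) * (μ * φ r + r * p1) + n * α * φ r / r ^ 2
        - α * ((n - 1) * p1 / r + p2) := by
  have e1 : r ^ (n - 1) = r ^ (n - 3) * r ^ 2 := by
    rw [← Real.rpow_natCast r 2, ← Real.rpow_add hr]; congr 1; push_cast; ring
  have e2 : r ^ (n - 2) = r ^ (n - 3) * r := by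
    rw [← Real.rpow_add_one hr.ne']; congr 1; ring
  have d2 := Real.hasDerivAt_rpow_const (p := n - 2) (Or.inl hr.ne')
  have d1 := Real.hasDerivAt_rpow_const (p := n - 1) (Or.inl hr.ne')
  rw [((d2.fun_mul hβ).fun_mul (hφ.fun_pow 2)).deriv, (d1.fun_mul hψ).deriv, hψr,
    show n - 2 - 1 = n - 3 by ring, show n - 1 - 1 = n - 2 by ring, e1, e2] at h
  have hR : 0 < r ^ (n - 3) := Real.rpow_pos_of_pos hr _
  generalize r ^ (n - 3) = R at *
  have hp := hpos.ne'
  have hR' := hR.ne'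
  have hc : R * r ^ 2 * φ r ≠ 0 := by positivity
  apply mul_left_cancel₀ hc
  push_cast at h
  field_simp at h ⊢
  linear_combination h

/-- (ODE2) with its derivatives carried out and the powers of `r` divided out. Here `ψ` is
`φ'`. -/
lemma ode2_expand {n α r p1 p2 b1 : ℝ} {φ ψ β γ : ℝ → ℝ} (hr : 0 < r) (hpos : 0 < φ r)
    (hψr : ψ r = p1) (hφ : HasDerivAt φ p1 r) (hψ : HasDerivAt ψ p2 r) (hβ : HasDerivAt β b1 r)
    (h : (n - 1) * γ r * φ r / r ^ 2 =
        -α * deriv (fun s => s ^ (n - 2) * (φ s) ^ 2) r / (r ^ (n - 1) * φ r) +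
          deriv (fun s => s ^ (n - 1) * β s * ψ s) r / r ^ (n - 1) -
          β r * φ r / r ^ 2) :
    (n - 1) * γ r * φ r / r ^ 2 =
      -α * ((n - 2) * φ r / r ^ 2 + 2 * p1 / r)
        + ((n - 1) * β r * p1 / r + b1 * p1 + β r * p2) - β r * φ r / r ^ 2 := by
  have e1 : r ^ (n - 1) = r ^ (n - 3) * r ^ 2 := by
    rw [← Real.rpow_natCast r 2, ← Real.rpow_add hr]; congr 1; push_cast; ring
  have e2 : r ^ (n - 2) = r ^ (n - 3) * r := by
    rw [← Real.rpow_add_one hr.ne']; congr 1; ring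
  have d2 := Real.hasDerivAt_rpow_const (p := n - 2) (Or.inl hr.ne')
  have d1 := Real.hasDerivAt_rpow_const (p := n - 1) (Or.inl hr.ne')
  rw [(d2.fun_mul (hφ.fun_pow 2)).deriv, ((d1.fun_mul hβ).fun_mul hψ).deriv, hψr,
    show n - 2 - 1 = n - 3 by ring, show n - 1 - 1 = n - 2 by ring, e1, e2] at h
  have hR : 0 < r ^ (n - 3) := Real.rpow_pos_of_pos hr _
  generalize r ^ (n - 3) = R at *
  have hp := hpos.ne'
  have hR' := hR.ne'
  rw [h]
  push_cast
  field_simp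

/-! ### The profile equation -/

/-- if `(φ, β, γ)` solve the ODE system (ODE1), (ODE2), then
`w = φ(r) (x₁/r) e^{-i log r}` solves `div(A ∇w) = (1/2)(i w + μ w + x·∇w)` away
from the origin, where `A = α I + i(β ν⊗ν + γ(I - ν⊗ν))`. -/
theorem stmt_2 (n : ℕ) (hn : 2 ≤ n) (μ α : ℝ) (φ β γ : ℝ → ℝ)
    (hφ : ContDiffOn ℝ 2 φ (Set.Ioi 0)) (hφpos : ∀ r > 0, 0 < φ r)
    (hβ : ContDiffOn ℝ 1 β (Set.Ioi 0)) (hγ : ContDiffOn ℝ 1 γ (Set.Ioi 0))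
    (hODE1 : ∀ r > (0:ℝ),
      deriv (fun s => s ^ ((n : ℝ) - 2) * β s * (φ s) ^ 2) r =
        r ^ ((n : ℝ) - 1) * φ r *
          ((1 / 2) * (μ * φ r + r * deriv φ r) + n * α * φ r / r ^ 2 -
            α * deriv (fun s => s ^ ((n : ℝ) - 1) * deriv φ s) r / r ^ ((n : ℝ) - 1)))
    (hODE2 : ∀ r > (0:ℝ),
      ((n : ℝ) - 1) * γ r * φ r / r ^ 2 =
        -α * deriv (fun s => s ^ ((n : ℝ) - 2) * (φ s) ^ 2) r / (r ^ ((n : ℝ) - 1) * φ r) +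
          deriv (fun s => s ^ ((n : ℝ) - 1) * β s * deriv φ s) r / r ^ ((n : ℝ) - 1) -
          β r * φ r / r ^ 2)
    (A : EuclideanSpace ℝ (Fin n) → Matrix (Fin n) (Fin n) ℂ)
    (hA : ∀ x : EuclideanSpace ℝ (Fin n), x ≠ 0 → ∀ k l : Fin n,
      A x k l = (α : ℂ) * (if k = l then 1 else 0) +
        Complex.I * ((β ‖x‖ * (x k * x l / ‖x‖ ^ 2) +
          γ ‖x‖ * ((if k = l then (1 : ℝ) else 0) - x k * x l / ‖x‖ ^ 2) : ℝ) : ℂ))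
    (w : EuclideanSpace ℝ (Fin n) → ℂ)
    (hw : ∀ x : EuclideanSpace ℝ (Fin n), x ≠ 0 →
      w x = (φ ‖x‖ : ℂ) * ((x ⟨0, by omega⟩ / ‖x‖ : ℝ) : ℂ) *
        Complex.exp (-Complex.I * (Real.log ‖x‖ : ℂ))) :
    ∀ x : EuclideanSpace ℝ (Fin n), x ≠ 0 →
      divAgrad A w x =
        (1 / 2) * (Complex.I * w x + (μ : ℂ) * w x + ∑ k, (x k : ℂ) * pdC w x k) := by
  intro x hx
  set i : Fin n := ⟨0, by omega⟩ with hi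
  -- the radial profile `g`, and its derivative `g₁` on `(0, ∞)`
  let e : ℝ → ℂ := fun s => Complex.exp (-Complex.I * (Real.log s : ℂ))
  let g : ℝ → ℂ := fun s => (φ s : ℂ) * e s / s
  let g₁ : ℝ → ℂ := fun s =>
    (((deriv φ s : ℝ) : ℂ) - Complex.I * φ s / s) * e s / s - φ s * e s / (s : ℂ) ^ 2
  have he : ∀ s > 0, HasDerivAt e (-Complex.I / s * e s) s := fun s hs => hasDerivAt_phase hs
  have dφ : ∀ s > 0, HasDerivAt φ (deriv φ s) s := fun s hs =>
    ((hφ.contDiffAt (Ioi_mem_nhds hs)).differentiableAt (by norm_num)).hasDerivAt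
  have dβ : ∀ s > 0, HasDerivAt β (deriv β s) s := fun s hs =>
    ((hβ.contDiffAt (Ioi_mem_nhds hs)).differentiableAt (by norm_num)).hasDerivAt
  have dγ : ∀ s > 0, HasDerivAt γ (deriv γ s) s := fun s hs =>
    ((hγ.contDiffAt (Ioi_mem_nhds hs)).differentiableAt (by norm_num)).hasDerivAt
  have hφ' : ContDiffOn ℝ 1 (deriv φ) (Set.Ioi 0) :=
    hφ.deriv_of_isOpen isOpen_Ioi (by norm_num)
  have dφ' : ∀ s > 0, HasDerivAt (deriv φ) (deriv (deriv φ) s) s := fun s hs =>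
    ((hφ'.contDiffAt (Ioi_mem_nhds hs)).differentiableAt (by norm_num)).hasDerivAt
  have did : ∀ s : ℝ, HasDerivAt (fun t : ℝ => (t : ℂ)) 1 s := fun s => by
    simpa using (hasDerivAt_id s).ofReal_comp
  have hg : ∀ s > 0, HasDerivAt g (g₁ s) s := by
    intro s hs
    have hs' : (s : ℂ) ≠ 0 := by exact_mod_cast hs.ne'
    refine ((((dφ s hs).ofReal_comp).fun_mul (he s hs)).fun_div (did s) hs').congr_deriv ?_
    simp only [g₁]
    field_simp
    ring
  have hpd : ∀ y : EuclideanSpace ℝ (Fin n), y ≠ 0 → ∀ k, pdC w y k =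
      g₁ ‖y‖ * ((y k : ℂ) / (‖y‖ : ℂ)) * y i + g ‖y‖ * (if i = k then 1 else 0) := by
    intro y hy k
    rw [← pdC_radial_mul_coord hy (hg _ (norm_pos_iff.mpr hy)) i k, pdC, pdC]
    congr 1
    apply Filter.EventuallyEq.fderiv_eq
    filter_upwards [isOpen_ne.mem_nhds hy] with z hz
    rw [hw z hz]
    simp only [g, e]
    push_cast
    ring
  let a : ℝ → ℂ := fun s => (α + Complex.I * γ s) * g₁ s / s +
    Complex.I * (β s - γ s) * (g₁ s * s + g s) / (s : ℂ) ^ 2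
  let b : ℝ → ℂ := fun s => (α + Complex.I * γ s) * g s
  have hr : 0 < ‖x‖ := norm_pos_iff.mpr hx
  have hrC : (‖x‖ : ℂ) ≠ 0 := by exact_mod_cast hr.ne'
  have hdiv : divAgrad A w x = ∑ k, fderiv ℝ (fun y : EuclideanSpace ℝ (Fin n) =>
        a ‖y‖ * (y i : ℂ) * (y k : ℂ) + b ‖y‖ * (if i = k then 1 else 0)) x
        (EuclideanSpace.single k 1) := by
    rw [divAgrad]
    refine Finset.sum_congr rfl fun k _ => ?_
    congr 1
    apply Filter.EventuallyEq.fderiv_eq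
    filter_upwards [isOpen_ne.mem_nhds hx] with y hy
    rw [← flux_eq α (β ‖y‖) (γ ‖y‖) (g₁ ‖y‖) (g ‖y‖) hy i k]
    exact Finset.sum_congr rfl fun l _ => by rw [hA y hy, hpd y hy]
  have h_euler : ∑ k, (x k : ℂ) * pdC w x k = (g₁ ‖x‖ * ‖x‖ + g ‖x‖) * x i := by
    have key : ∀ k, (x k : ℂ) * pdC w x k = g₁ ‖x‖ / ‖x‖ * x i * ((x k : ℂ) * x k) +
        (if i = k then g ‖x‖ * x k else 0) := by
      intro k
      rw [hpd x hx]
      split_ifs <;> ring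
    simp_rw [key]
    rw [Finset.sum_add_distrib, ← Finset.mul_sum, sum_coord_sq]
    simp only [Finset.sum_ite_eq, Finset.mem_univ, if_true]
    field_simp
  have hwx : w x = g ‖x‖ * x i := by
    rw [hw x hx]
    simp only [g, e]
    push_cast
    ring
  have o1 := ode1_expand hr (hφpos _ hr) rfl (dφ _ hr) (dφ' _ hr) (dβ _ hr) (hODE1 _ hr)
  have o2 := ode2_expand hr (hφpos _ hr) rfl (dφ _ hr) (dφ' _ hr) (dβ _ hr) (hODE2 _ hr)
  rw [hdiv, h_euler, hwx]
  let g₂ : ℂ :=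
    ((deriv (deriv φ) ‖x‖ : ℝ) - Complex.I * (deriv φ ‖x‖ : ℝ) / ‖x‖
      + Complex.I * φ ‖x‖ / (‖x‖ : ℂ) ^ 2) * e ‖x‖ / ‖x‖
    + ((deriv φ ‖x‖ : ℝ) - Complex.I * φ ‖x‖ / ‖x‖) * (-Complex.I / ‖x‖ * e ‖x‖) / ‖x‖
    - ((deriv φ ‖x‖ : ℝ) - Complex.I * φ ‖x‖ / ‖x‖) * e ‖x‖ / (‖x‖ : ℂ) ^ 2
    - ((deriv φ ‖x‖ : ℝ) * e ‖x‖ / (‖x‖ : ℂ) ^ 2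
      + φ ‖x‖ * (-Complex.I / ‖x‖ * e ‖x‖) / (‖x‖ : ℂ) ^ 2
      - 2 * φ ‖x‖ * e ‖x‖ / (‖x‖ : ℂ) ^ 3)
  have hsq : HasDerivAt (fun s : ℝ => (s : ℂ) ^ 2) (2 * ‖x‖) ‖x‖ := by
    simpa using (did ‖x‖).fun_pow 2
  have hg₁ : HasDerivAt g₁ g₂ ‖x‖ := by
    have hφC := (dφ _ hr).ofReal_comp
    have hφ'C := (dφ' _ hr).ofReal_comp
    refine ((((hφ'C.fun_sub ((hφC.const_mul Complex.I).fun_div (did _) hrC)).fun_mul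
      (he _ hr)).fun_div (did _) hrC).fun_sub
      ((hφC.fun_mul (he _ hr)).fun_div hsq (pow_ne_zero 2 hrC))).congr_deriv ?_
    simp only [g₂]
    field_simp
    ring
  have hb : HasDerivAt b (Complex.I * (deriv γ ‖x‖ : ℝ) * g ‖x‖
      + (α + Complex.I * γ ‖x‖) * g₁ ‖x‖) ‖x‖ :=
    ((((dγ _ hr).ofReal_comp).const_mul Complex.I).const_add (α : ℂ)).fun_mul (hg _ hr)
  have ha : HasDerivAt a
      ((Complex.I * (deriv γ ‖x‖ : ℝ) * g₁ ‖x‖ + (α + Complex.I * γ ‖x‖) * g₂) / ‖x‖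
        - (α + Complex.I * γ ‖x‖) * g₁ ‖x‖ / (‖x‖ : ℂ) ^ 2
        + (Complex.I * ((deriv β ‖x‖ : ℝ) - (deriv γ ‖x‖ : ℝ)) * (g₁ ‖x‖ * ‖x‖ + g ‖x‖)
          + Complex.I * (β ‖x‖ - γ ‖x‖) * (g₂ * ‖x‖ + 2 * g₁ ‖x‖)) / (‖x‖ : ℂ) ^ 2
        - 2 * Complex.I * (β ‖x‖ - γ ‖x‖) * (g₁ ‖x‖ * ‖x‖ + g ‖x‖) / (‖x‖ : ℂ) ^ 3) ‖x‖ := by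
    have hγC := (dγ _ hr).ofReal_comp
    have hβC := (dβ _ hr).ofReal_comp
    refine (((((hγC.const_mul Complex.I).const_add (α : ℂ)).fun_mul hg₁).fun_div
      (did _) hrC).fun_add ((((hβC.fun_sub hγC).const_mul Complex.I).fun_mul
      ((hg₁.fun_mul (did _)).fun_add (hg _ hr))).fun_div hsq (pow_ne_zero 2 hrC))).congr_deriv ?_
    generalize g₂ = G₂
    generalize g₁ ‖x‖ = G₁
    generalize g ‖x‖ = G
    field_simp
    ring
  rw [sum_fderiv_flux hx ha hb i]
  have o1' := congrArg (fun t : ℝ => (t : ℂ)) o1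
  have o2' := congrArg (fun t : ℝ => (t : ℂ)) o2
  simp only [a, g₂, g₁, g]
  push_cast at o1' o2' ⊢
  clear_value e
  clear ha hb hg₁ hsq h_euler hwx hdiv hpd hg o1 o2
  generalize e ‖x‖ = E at *
  generalize (‖x‖ : ℂ) = r at *
  generalize ((φ ‖x‖ : ℝ) : ℂ) = φ0 at *
  generalize ((deriv φ ‖x‖ : ℝ) : ℂ) = φ1 at *
  generalize ((deriv (deriv φ) ‖x‖ : ℝ) : ℂ) = φ2 at *
  generalize ((β ‖x‖ : ℝ) : ℂ) = β0 at *
  generalize ((deriv β ‖x‖ : ℝ) : ℂ) = β1 at *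
  generalize ((γ ‖x‖ : ℝ) : ℂ) = γ0 at *
  generalize ((deriv γ ‖x‖ : ℝ) : ℂ) = γ1 at *
  generalize ((x i : ℝ) : ℂ) = X at *
  -- (ODE1) is the real part of the radial identity and (ODE2) its imaginary part
  refine eq_of_sub_eq_zero (Eq.trans ?_ (sub_eq_zero.mpr (congrArg₂ (fun u v =>
    E * X / r * u - Complex.I * (E * X / r) * v) o1' o2')))
  field_simp
  ring_nf
  simp only [Complex.I_sq, Complex.I_pow_three]
  ring
end
end

section
/- Let n ≥ 2, μ ∈ ℝ, α ∈ ℝ, and let φ = φ_μ. Then for every r > 0 the integrals ∫₀^r φ(s)² s^{n−1} ds, ∫₀^r φ(s)² s^{n−3} ds, ∫₀^r φ'(s)² s^{n−1} ds converge, the function β := β_φ is smooth on (0,∞), and β satisfies (ODE1): for all r > 0, (r^{n−2} β(r) φ(r)²)' = r^{n−1} φ(r)·[ (1/2)(μφ(r) + rφ'(r)) + nα φ(r)/r² − α (r^{n−1}φ')'(r)/r^{n−1} ]. -/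
/-!
The three integrands are smooth on `(0,∞)` and, since `φ(s) = s` and `φ'(s) = 1` near `0`, equal
`s^{n+1}`, `s^{n-1}`, `s^{n-1}` there, which is integrable at `0`. Hence each primitive
`I(r) = ∫₀^r` is smooth on `(0,∞)` with derivative the integrand (`primitive_of_eq_rpow`), and `β`
is an algebraic combination of smooth functions with positive denominators.

Multiplying by the weight `r^{n-2} φ²` clears all denominators:
`r^{n-2} β φ² = (r^n φ² + (2μ - n) I₁) / 4 + nα I₂ + α I₃ - α (r^{n-1} φ') φ`.
Differentiating term by term gives the equation: the two `n r^{n-1} φ² / 4` terms cancel, and so do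
the two `α r^{n-1} φ'²` terms.
-/

open MeasureTheory
open scoped BigOperators

noncomputable section

/-- `φ_μ`: positive and smooth on `(0,∞)`, equal to `r` for `0 < r < 3/4`, and equal to
`r^{-μ} + C_μ r^{-μ-2}` for `r > 1`. -/
def IsPhiMu (μ Cμ : ℝ) (φ : ℝ → ℝ) : Prop :=
  (∀ r > 0, 0 < φ r) ∧ ContDiffOn ℝ (⊤ : ℕ∞) φ (Set.Ioi 0) ∧
  (∀ r ∈ Set.Ioo (0 : ℝ) (3 / 4), φ r = r) ∧
  (∀ r > (1 : ℝ), φ r = r ^ (-μ) + Cμ * r ^ (-μ - 2))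

/-- The explicit solution `β_φ` of (ODE1). -/
def betaPhi (n : ℕ) (μ α : ℝ) (φ : ℝ → ℝ) (r : ℝ) : ℝ :=
  (1 / 4) * (r ^ 2 + (2 * μ - n) * (r ^ ((n : ℝ) - 2) * (φ r) ^ 2)⁻¹ *
      ∫ s in Set.Ioc (0 : ℝ) r, (φ s) ^ 2 * s ^ ((n : ℝ) - 1)) +
  n * α * (r ^ ((n : ℝ) - 2) * (φ r) ^ 2)⁻¹ *
      (∫ s in Set.Ioc (0 : ℝ) r, (φ s) ^ 2 * s ^ ((n : ℝ) - 3)) +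
  α * (r ^ ((n : ℝ) - 2) * (φ r) ^ 2)⁻¹ *
      (∫ s in Set.Ioc (0 : ℝ) r, (deriv φ s) ^ 2 * s ^ ((n : ℝ) - 1)) -
  α * r * deriv φ r / φ r

/-- A function that is smooth on `(0,∞)` and a power `s^p` with `p > -1` near `0` is integrable on
each `(0,r]`, and its primitive from `0` is smooth on `(0,∞)`. -/
theorem primitive_of_eq_rpow (f : ℝ → ℝ) (p : ℝ) (hp : -1 < p)
    (hf : ContDiffOn ℝ (⊤ : ℕ∞) f (Set.Ioi 0))
    (h0 : ∀ s ∈ Set.Ioo (0 : ℝ) (3 / 4), f s = s ^ p) :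
    (∀ r > (0 : ℝ), IntegrableOn f (Set.Ioc 0 r)) ∧
    (∀ r > (0 : ℝ), HasDerivAt (fun r => ∫ s in Set.Ioc (0 : ℝ) r, f s) (f r) r) ∧
    ContDiffOn ℝ (⊤ : ℕ∞) (fun r => ∫ s in Set.Ioc (0 : ℝ) r, f s) (Set.Ioi 0) := by
  have hint : ∀ r > (0 : ℝ), IntegrableOn f (Set.Ioc 0 r) := by
    intro r hr
    have h1 : IntegrableOn f (Set.Ioc 0 (1 / 2)) := by
      have h2 : IntegrableOn (fun s : ℝ => s ^ p) (Set.Ioc 0 (1 / 2)) :=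
        (intervalIntegrable_iff_integrableOn_Ioc_of_le (by norm_num)).1
          (intervalIntegral.intervalIntegrable_rpow' hp)
      refine h2.congr_fun (fun s hs => (h0 s ⟨hs.1, ?_⟩).symm) measurableSet_Ioc
      linarith [hs.2]
    have h3 : IntegrableOn f (Set.Icc (1 / 2) r) :=
      (hf.continuousOn.mono fun s hs =>
        lt_of_lt_of_le (by norm_num : (0 : ℝ) < 1 / 2) hs.1).integrableOn_Icc
    refine (h1.union h3).mono_set fun s hs => ?_
    rcases le_total s (1 / 2) with h | h
    · exact Or.inl ⟨hs.1, h⟩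
    · exact Or.inr ⟨h, hs.2⟩
  have hder : ∀ r > (0 : ℝ), HasDerivAt (fun r => ∫ s in Set.Ioc (0 : ℝ) r, f s) (f r) r := by
    intro r hr
    have hI : IntervalIntegrable f volume 0 r :=
      (intervalIntegrable_iff_integrableOn_Ioc_of_le hr.le).2 (hint r hr)
    have h := intervalIntegral.integral_hasDerivAt_right hI
      (hf.continuousOn.stronglyMeasurableAtFilter isOpen_Ioi r hr)
      (hf.continuousOn.continuousAt (Ioi_mem_nhds hr))
    refine h.congr_of_eventuallyEq ?_
    filter_upwards [Ioi_mem_nhds hr] with x hx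
    exact (intervalIntegral.integral_of_le (le_of_lt hx)).symm
  refine ⟨hint, hder, ?_⟩
  rw [contDiffOn_infty_iff_deriv_of_isOpen isOpen_Ioi]
  exact ⟨fun r hr => (hder r hr).differentiableAt.differentiableWithinAt,
    hf.congr fun r hr => (hder r hr).deriv⟩

/-- for `φ = φ_μ` the integrals defining `β_φ` converge, `β := β_φ` is smooth
on `(0,∞)`, and `β` solves (ODE1). -/
theorem stmt_3 (n : ℕ) (hn : 2 ≤ n) (μ α Cμ : ℝ) (hCμ : 0 ≤ Cμ) (φ : ℝ → ℝ)
    (hφ : IsPhiMu μ Cμ φ) :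
    (∀ r > (0:ℝ),
      IntegrableOn (fun s => (φ s) ^ 2 * s ^ ((n : ℝ) - 1)) (Set.Ioc 0 r) ∧
      IntegrableOn (fun s => (φ s) ^ 2 * s ^ ((n : ℝ) - 3)) (Set.Ioc 0 r) ∧
      IntegrableOn (fun s => (deriv φ s) ^ 2 * s ^ ((n : ℝ) - 1)) (Set.Ioc 0 r)) ∧
    ContDiffOn ℝ (⊤ : ℕ∞) (betaPhi n μ α φ) (Set.Ioi 0) ∧
    (∀ r > (0:ℝ),
      deriv (fun s => s ^ ((n : ℝ) - 2) * betaPhi n μ α φ s * (φ s) ^ 2) r =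
        r ^ ((n : ℝ) - 1) * φ r *
          ((1 / 2) * (μ * φ r + r * deriv φ r) + n * α * φ r / r ^ 2 -
            α * deriv (fun s => s ^ ((n : ℝ) - 1) * deriv φ s) r / r ^ ((n : ℝ) - 1))) := by
  obtain ⟨hpos, hsm, hnear, -⟩ := hφ
  have hn' : (2 : ℝ) ≤ n := by exact_mod_cast hn
  have hφ' : ContDiffOn ℝ (⊤ : ℕ∞) (deriv φ) (Set.Ioi 0) :=
    ((contDiffOn_infty_iff_deriv_of_isOpen isOpen_Ioi).1 hsm).2
  have hpow : ∀ p : ℝ, ContDiffOn ℝ (⊤ : ℕ∞) (fun s : ℝ => s ^ p) (Set.Ioi 0) := fun p =>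
    contDiffOn_id.rpow_const_of_ne fun s hs => ne_of_gt hs
  have hd : ∀ s ∈ Set.Ioo (0 : ℝ) (3 / 4), deriv φ s = 1 := by
    intro s hs
    have h : φ =ᶠ[nhds s] id := by
      filter_upwards [Ioo_mem_nhds hs.1 hs.2] with x hx using hnear x hx
    rw [h.deriv_eq, deriv_id]
  have hadd : ∀ s > (0 : ℝ), ∀ p : ℝ, s ^ 2 * s ^ p = s ^ (p + 2) := by
    intro s hs p
    rw [Real.rpow_add hs, Real.rpow_ofNat, mul_comm]
  obtain ⟨i1, d1, c1⟩ := primitive_of_eq_rpow (fun s => (φ s) ^ 2 * s ^ ((n : ℝ) - 1))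
    ((n : ℝ) - 1 + 2) (by linarith) ((hsm.pow 2).mul (hpow _))
    (fun s hs => by simp only [hnear s hs, hadd s hs.1])
  obtain ⟨i2, d2, c2⟩ := primitive_of_eq_rpow (fun s => (φ s) ^ 2 * s ^ ((n : ℝ) - 3))
    ((n : ℝ) - 3 + 2) (by linarith) ((hsm.pow 2).mul (hpow _))
    (fun s hs => by simp only [hnear s hs, hadd s hs.1])
  obtain ⟨i3, d3, c3⟩ := primitive_of_eq_rpow (fun s => (deriv φ s) ^ 2 * s ^ ((n : ℝ) - 1))
    ((n : ℝ) - 1) (by linarith) ((hφ'.pow 2).mul (hpow _))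
    (fun s hs => by simp only [hd s hs, one_pow, one_mul])
  refine ⟨fun r hr => ⟨i1 r hr, i2 r hr, i3 r hr⟩, ?_, ?_⟩
  · have hw : ContDiffOn ℝ (⊤ : ℕ∞) (fun r : ℝ => (r ^ ((n : ℝ) - 2) * (φ r) ^ 2)⁻¹)
        (Set.Ioi 0) :=
      ((hpow _).mul (hsm.pow 2)).inv fun r hr =>
        (mul_pos (Real.rpow_pos_of_pos hr _) (pow_pos (hpos r hr) 2)).ne'
    have hid : ContDiffOn ℝ (⊤ : ℕ∞) (fun r : ℝ => r) (Set.Ioi 0) := contDiffOn_id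
    exact (((contDiffOn_const.mul ((hid.pow 2).add ((contDiffOn_const.mul hw).mul c1))).add
      ((contDiffOn_const.mul hw).mul c2)).add ((contDiffOn_const.mul hw).mul c3)).sub
      (((contDiffOn_const.mul hid).mul hφ').div hsm fun r hr => (hpos r hr).ne')
  · intro r hr
    have hmem : Set.Ioi (0 : ℝ) ∈ nhds r := Ioi_mem_nhds hr
    have hDφ : HasDerivAt φ (deriv φ r) r :=
      ((hsm.contDiffAt hmem).differentiableAt (by simp)).hasDerivAt
    have hDψ : HasDerivAt (fun s => s ^ ((n : ℝ) - 1) * deriv φ s)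
        (deriv (fun s => s ^ ((n : ℝ) - 1) * deriv φ s) r) r :=
      ((((hpow _).mul hφ').contDiffAt hmem).differentiableAt (by simp)).hasDerivAt
    have hDn : HasDerivAt (fun s : ℝ => s ^ (n : ℝ)) (n * r ^ ((n : ℝ) - 1)) r :=
      Real.hasDerivAt_rpow_const (Or.inl hr.ne')
    have hD := ((((hDn.mul (hDφ.pow 2)).add ((d1 r hr).const_mul (2 * μ - n))).const_mul
      (1 / 4 : ℝ)).add ((d2 r hr).const_mul (n * α))).add ((d3 r hr).const_mul α) |>.sub
      ((hDψ.mul hDφ).const_mul α)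
    have hclear : (fun s => s ^ ((n : ℝ) - 2) * betaPhi n μ α φ s * (φ s) ^ 2) =ᶠ[nhds r] _ :=
      Filter.eventually_of_mem hmem fun s (hs : 0 < s) => by
        have hφs := (hpos s hs).ne'
        have hws := (Real.rpow_pos_of_pos hs ((n : ℝ) - 2)).ne'
        have e1 : s ^ (n : ℝ) = s ^ ((n : ℝ) - 2) * s ^ 2 := by
          rw [mul_comm, hadd s hs]; congr 1; ring
        have e2 : s ^ ((n : ℝ) - 1) = s ^ ((n : ℝ) - 2) * s := by
          rw [← Real.rpow_add_one hs.ne']; congr 1; ring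
        show _ = (1 / 4) * (s ^ (n : ℝ) * φ s ^ 2 + (2 * μ - n) *
          ∫ t in Set.Ioc (0 : ℝ) s, (φ t) ^ 2 * t ^ ((n : ℝ) - 1)) +
          n * α * (∫ t in Set.Ioc (0 : ℝ) s, (φ t) ^ 2 * t ^ ((n : ℝ) - 3)) +
          α * (∫ t in Set.Ioc (0 : ℝ) s, (deriv φ t) ^ 2 * t ^ ((n : ℝ) - 1)) -
          α * (s ^ ((n : ℝ) - 1) * deriv φ s * φ s)
        rw [e1, e2]
        unfold betaPhi
        field_simp
    refine hclear.deriv_eq.trans (hD.deriv.trans ?_)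
    simp only [Pi.pow_apply]
    push_cast
    have hr1 := (Real.rpow_pos_of_pos hr ((n : ℝ) - 1)).ne'
    have e1 : r ^ (n : ℝ) = r ^ ((n : ℝ) - 1) * r := by
      rw [← Real.rpow_add_one hr.ne']; congr 1; ring
    have e2 : r ^ ((n : ℝ) - 3) = r ^ ((n : ℝ) - 1) / r ^ 2 := by
      rw [eq_div_iff (by positivity), mul_comm, hadd r hr]; congr 1; ring
    rw [e1, e2]
    -- The derivative of `s^{n-1} φ'` enters both sides linearly, so its value is irrelevant.
    generalize deriv (fun s => s ^ ((n : ℝ) - 1) * deriv φ s) r = D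
    field_simp
    ring
end
end

section
/- Let n ≥ 3, let μ ≥ 0 with 2μ < n−2, let α = 1, C_μ = 0, and φ = φ_μ (so φ(r) = r^{−μ} for r > 1). Then there exist real constants c₁, c₂ (depending on n, μ and φ) such that β_φ(r) = c₁ + c₂ r^{2μ−n+2} for all r ≥ 3/2. Consequently β := β_φ is bounded on (0,∞), and the function γ : (0,∞) → ℝ defined pointwise by solving (ODE2) for γ (with this β and φ) is also bounded on (0,∞). -/
/-!
The function `β_φ` is assembled from three primitives `r ↦ ∫₀^r f`, where `f` is `φ² s^{n-1}`,
`φ² s^{n-3}` or `φ'² s^{n-1}`. Each `f` is a pure power of `s` near `0` and a multiple of a pure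
power for `s > 1`, so each primitive is `C¹` and explicit near `0`, and explicit up to an additive
constant near `∞` (`primitive_facts`). With `p = n - 2 - 2μ > 0` one has `r^{n-2} φ² = r^p` for
`r > 1`. The multiples of `r²` in `β_φ` then cancel, and the constants of integration produce the
`r^{-p}` term (`betaPhi_far`). Near `0`, `β_φ` is a constant plus a multiple of `r²`
(`betaPhi_near`).

With `q = r φ'/φ`, expanding (ODE2) gives (`gammaOf_formula`)
`(n-1) γ = -(n-2) - 2q + (n-1) β q + (r β') q + β (r² φ''/φ) - β`.
Each of `β`, `r β'`, `q`, `r² φ''/φ` is continuous on `(0,∞)` and explicitly bounded near both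
ends, hence bounded (`bounded_of_ends`).
-/

open MeasureTheory
open scoped BigOperators

noncomputable section

/-- The function `γ` obtained by solving (ODE2) pointwise, given `φ` and `β`. -/
def gammaOf (n : ℕ) (α : ℝ) (φ β : ℝ → ℝ) (r : ℝ) : ℝ :=
  r ^ 2 / (((n : ℝ) - 1) * φ r) *
    (-α * deriv (fun s => s ^ ((n : ℝ) - 2) * (φ s) ^ 2) r / (r ^ ((n : ℝ) - 1) * φ r) +
      deriv (fun s => s ^ ((n : ℝ) - 1) * β s * deriv φ s) r / r ^ ((n : ℝ) - 1) -
      β r * φ r / r ^ 2)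

open Set Filter Topology

/-! ### Functions and primitives on the half-line -/

lemma bounded_of_ends (f : ℝ → ℝ) (hf : ContinuousOn f (Ioi 0)) (M₀ M₁ : ℝ)
    (h0 : ∀ r ∈ Ioo (0 : ℝ) (3 / 4), |f r| ≤ M₀) (h1 : ∀ r > (3 / 2 : ℝ), |f r| ≤ M₁) :
    ∃ M : ℝ, ∀ r > (0 : ℝ), |f r| ≤ M := by
  obtain ⟨C, hC⟩ := (isCompact_Icc (a := (3 / 4 : ℝ)) (b := 3 / 2)).exists_bound_of_continuousOn
    (hf.mono fun x hx => lt_of_lt_of_le (by norm_num) hx.1)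
  refine ⟨max C (max M₀ M₁), fun r hr => ?_⟩
  rcases lt_or_ge r (3 / 4) with h | h
  · exact (h0 r ⟨hr, h⟩).trans (by simp)
  rcases le_or_gt r (3 / 2) with h' | h'
  · exact (hC r ⟨h, h'⟩).trans (by simp)
  · exact (h1 r h').trans (by simp)

/-- Regularity and explicit values at both ends of the primitive of a function that is the power
`s^m` near `0` and `A s^k` for `s > 1`. -/
lemma primitive_facts (f : ℝ → ℝ) (m k A : ℝ) (hm : -1 < m) (hk : -1 < k)
    (hf : ContinuousOn f (Ioi 0)) (h0 : ∀ s ∈ Ioo (0 : ℝ) (3 / 4), f s = s ^ m)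
    (h1 : ∀ s > (1 : ℝ), f s = A * s ^ k) :
    ContDiffOn ℝ 1 (fun r => ∫ s in Ioc (0 : ℝ) r, f s) (Ioi 0) ∧
    (∀ r ∈ Ioo (0 : ℝ) (3 / 4), ∫ s in Ioc (0 : ℝ) r, f s = r ^ (m + 1) / (m + 1)) ∧
    ∃ K : ℝ, ∀ r > (1 : ℝ),
      ∫ s in Ioc (0 : ℝ) r, f s = K + A * (r ^ (k + 1) / (k + 1)) := by
  have hnear : ∀ r ∈ Ioo (0 : ℝ) (3 / 4), IntervalIntegrable f volume 0 r := by
    intro r hr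
    refine (intervalIntegral.intervalIntegrable_rpow' hm).congr ?_
    intro s hs
    rw [uIoc_of_le hr.1.le] at hs
    exact (h0 s ⟨hs.1, hs.2.trans_lt hr.2⟩).symm
  have hmid : ∀ a > (0 : ℝ), ∀ b > (0 : ℝ), IntervalIntegrable f volume a b := by
    intro a ha b hb
    refine (hf.mono fun x hx => ?_).intervalIntegrable
    exact lt_of_lt_of_le (lt_min ha hb) hx.1
  have hint : ∀ r > (0 : ℝ), IntervalIntegrable f volume 0 r := fun r hr =>
    (hnear (1 / 2) (by norm_num)).trans (hmid (1 / 2) (by norm_num) r hr)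
  have hset : ∀ r > (0 : ℝ), ∫ s in Ioc (0 : ℝ) r, f s = ∫ s in (0 : ℝ)..r, f s :=
    fun r hr => (intervalIntegral.integral_of_le (le_of_lt hr)).symm
  have hder : ∀ r ∈ Ioi (0 : ℝ), HasDerivAt (fun r => ∫ s in Ioc (0 : ℝ) r, f s) (f r) r := by
    intro r hr
    have h := intervalIntegral.integral_hasDerivAt_right (hint r hr)
      (hf.stronglyMeasurableAtFilter isOpen_Ioi r hr) (hf.continuousAt (Ioi_mem_nhds hr))
    refine h.congr_of_eventuallyEq ?_
    filter_upwards [Ioi_mem_nhds hr] with x hx using hset x hx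
  refine ⟨?_, ?_, ?_⟩
  · rw [show (1 : WithTop ℕ∞) = 0 + 1 from (zero_add 1).symm,
      contDiffOn_succ_iff_deriv_of_isOpen isOpen_Ioi]
    refine ⟨fun r hr => (hder r hr).differentiableAt.differentiableWithinAt, by simp, ?_⟩
    rw [contDiffOn_zero]
    exact hf.congr fun r hr => (hder r hr).deriv
  · intro r hr
    rw [hset r hr.1, intervalIntegral.integral_congr_ae (g := fun s => s ^ m)
      (ae_of_all _ fun s hs => ?_), integral_rpow (Or.inl hm), Real.zero_rpow (by linarith)]
    · simp
    · rw [uIoc_of_le hr.1.le] at hs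
      exact h0 s ⟨hs.1, hs.2.trans_lt hr.2⟩
  · refine ⟨(∫ s in (0 : ℝ)..1, f s) - A * (1 / (k + 1)), fun r hr => ?_⟩
    have hr0 : (0 : ℝ) < r := by linarith
    have e : ∫ s in (1 : ℝ)..r, f s = A * ((r ^ (k + 1) - 1) / (k + 1)) := by
      rw [intervalIntegral.integral_congr_ae (g := fun s => A * s ^ k)
        (ae_of_all _ fun s hs => ?_), intervalIntegral.integral_const_mul,
        integral_rpow (Or.inl hk), Real.one_rpow]
      rw [uIoc_of_le hr.le] at hs
      exact h1 s hs.1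
    rw [hset r hr0, ← intervalIntegral.integral_add_adjacent_intervals (hint 1 one_pos)
      (hmid 1 one_pos r hr0), e]
    ring

/-! ### The profile `φ` and its derivatives -/

section

variable {n : ℕ} {μ : ℝ} {φ : ℝ → ℝ}

lemma phi_far (hφ : IsPhiMu μ 0 φ) {r : ℝ} (hr : 1 < r) : φ r = r ^ (-μ) := by
  rw [hφ.2.2.2 r hr]; ring

lemma deriv_phi_near (hφ : IsPhiMu μ 0 φ) {r : ℝ} (hr : r ∈ Ioo (0 : ℝ) (3 / 4)) :
    deriv φ r = 1 := by
  have : φ =ᶠ[𝓝 r] id := by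
    filter_upwards [isOpen_Ioo.mem_nhds hr] with x hx using hφ.2.2.1 x hx
  rw [this.deriv_eq, deriv_id]

lemma deriv_phi_far (hφ : IsPhiMu μ 0 φ) {r : ℝ} (hr : 1 < r) :
    deriv φ r = -μ * r ^ (-μ - 1) := by
  have : φ =ᶠ[𝓝 r] fun x => x ^ (-μ) := by
    filter_upwards [Ioi_mem_nhds hr] with x hx using phi_far hφ hx
  rw [this.deriv_eq, Real.deriv_rpow_const]

lemma deriv2_phi_near (hφ : IsPhiMu μ 0 φ) {r : ℝ} (hr : r ∈ Ioo (0 : ℝ) (3 / 4)) :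
    deriv (deriv φ) r = 0 := by
  have : deriv φ =ᶠ[𝓝 r] fun _ => 1 := by
    filter_upwards [isOpen_Ioo.mem_nhds hr] with x hx using deriv_phi_near hφ hx
  rw [this.deriv_eq, deriv_const]

lemma deriv2_phi_far (hφ : IsPhiMu μ 0 φ) {r : ℝ} (hr : 1 < r) :
    deriv (deriv φ) r = μ * (μ + 1) * r ^ (-μ - 2) := by
  have : deriv φ =ᶠ[𝓝 r] fun x => -μ * x ^ (-μ - 1) := by
    filter_upwards [Ioi_mem_nhds hr] with x hx using deriv_phi_far hφ hx
  rw [this.deriv_eq, deriv_const_mul_field, Real.deriv_rpow_const,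
    show -μ - 1 - 1 = -μ - 2 by ring]
  ring

lemma contDiffOn_phi (hφ : IsPhiMu μ 0 φ) : ContDiffOn ℝ 2 φ (Ioi 0) :=
  hφ.2.1.of_le (WithTop.coe_le_coe.2 (le_top : (2 : ℕ∞) ≤ ⊤))

lemma contDiffOn_deriv_phi (hφ : IsPhiMu μ 0 φ) : ContDiffOn ℝ 1 (deriv φ) (Ioi 0) :=
  (contDiffOn_phi hφ).deriv_of_isOpen isOpen_Ioi (by norm_num)

lemma contDiffOn_rpow (a : ℝ) : ContDiffOn ℝ 1 (fun s : ℝ => s ^ a) (Ioi 0) := fun _ hx =>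
  (Real.contDiffAt_rpow_const_of_ne (ne_of_gt hx)).contDiffWithinAt

/-! ### The three primitives and `β_φ` -/

lemma phi_sq_facts (hφ : IsPhiMu μ 0 φ) (hn : 3 ≤ n) (hμn : 2 * μ < (n : ℝ) - 2) (c : ℝ)
    (hc : c ≤ 3) :
    ContDiffOn ℝ 1 (fun r => ∫ s in Ioc (0 : ℝ) r, (φ s) ^ 2 * s ^ ((n : ℝ) - c)) (Ioi 0) ∧
    (∀ r ∈ Ioo (0 : ℝ) (3 / 4), ∫ s in Ioc (0 : ℝ) r, (φ s) ^ 2 * s ^ ((n : ℝ) - c) =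
      r ^ ((n : ℝ) - c + 2 + 1) / ((n : ℝ) - c + 2 + 1)) ∧
    ∃ K : ℝ, ∀ r > (1 : ℝ), ∫ s in Ioc (0 : ℝ) r, (φ s) ^ 2 * s ^ ((n : ℝ) - c) =
      K + 1 * (r ^ ((n : ℝ) - c - 2 * μ + 1) / ((n : ℝ) - c - 2 * μ + 1)) := by
  have hn' : (3 : ℝ) ≤ n := by exact_mod_cast hn
  refine primitive_facts _ _ _ 1 (by linarith) (by linarith) ?_ ?_ ?_
  · exact (((contDiffOn_phi hφ).continuousOn).pow 2).mul (contDiffOn_rpow _).continuousOn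
  · intro s hs
    rw [hφ.2.2.1 s hs, Real.rpow_add hs.1, Real.rpow_two, mul_comm]
  · intro s hs
    have hs0 : (0 : ℝ) < s := by linarith
    rw [phi_far hφ hs, ← Real.rpow_natCast, ← Real.rpow_mul hs0.le, ← Real.rpow_add hs0, one_mul]
    congr 1
    push_cast
    ring

lemma deriv_phi_sq_facts (hφ : IsPhiMu μ 0 φ) (hn : 3 ≤ n) (hμn : 2 * μ < (n : ℝ) - 2) :
    ContDiffOn ℝ 1 (fun r => ∫ s in Ioc (0 : ℝ) r, (deriv φ s) ^ 2 * s ^ ((n : ℝ) - 1)) (Ioi 0) ∧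
    (∀ r ∈ Ioo (0 : ℝ) (3 / 4), ∫ s in Ioc (0 : ℝ) r, (deriv φ s) ^ 2 * s ^ ((n : ℝ) - 1) =
      r ^ ((n : ℝ) - 1 + 1) / ((n : ℝ) - 1 + 1)) ∧
    ∃ K : ℝ, ∀ r > (1 : ℝ), ∫ s in Ioc (0 : ℝ) r, (deriv φ s) ^ 2 * s ^ ((n : ℝ) - 1) =
      K + μ ^ 2 * (r ^ ((n : ℝ) - 3 - 2 * μ + 1) / ((n : ℝ) - 3 - 2 * μ + 1)) := by
  have hn' : (3 : ℝ) ≤ n := by exact_mod_cast hn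
  refine primitive_facts _ _ _ _ (by linarith) (by linarith) ?_ ?_ ?_
  · exact (((contDiffOn_deriv_phi hφ).continuousOn).pow 2).mul (contDiffOn_rpow _).continuousOn
  · intro s hs
    rw [deriv_phi_near hφ hs]
    ring
  · intro s hs
    have hs0 : (0 : ℝ) < s := by linarith
    rw [deriv_phi_far hφ hs, mul_pow, ← Real.rpow_natCast (s ^ _), ← Real.rpow_mul hs0.le,
      mul_assoc, ← Real.rpow_add hs0, neg_sq]
    congr 2
    push_cast
    ring

lemma contDiffOn_betaPhi (hφ : IsPhiMu μ 0 φ) (hn : 3 ≤ n) (hμn : 2 * μ < (n : ℝ) - 2) :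
    ContDiffOn ℝ 1 (betaPhi n μ 1 φ) (Ioi 0) := by
  have hφ1 : ContDiffOn ℝ 1 φ (Ioi 0) := (contDiffOn_phi hφ).of_le (by norm_num)
  have hw : ContDiffOn ℝ 1 (fun r => (r ^ ((n : ℝ) - 2) * (φ r) ^ 2)⁻¹) (Ioi 0) :=
    ((contDiffOn_rpow _).mul (hφ1.pow 2)).inv fun r hr =>
      (mul_pos (Real.rpow_pos_of_pos hr _) (pow_pos (hφ.1 r hr) 2)).ne'
  have h1 := (phi_sq_facts hφ hn hμn 1 (by norm_num)).1
  have h2 := (phi_sq_facts hφ hn hμn 3 (by norm_num)).1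
  have h3 := (deriv_phi_sq_facts hφ hn hμn).1
  have hq : ContDiffOn ℝ 1 (fun r => 1 * r * deriv φ r / φ r) (Ioi 0) :=
    ((contDiffOn_const.mul contDiffOn_id).mul (contDiffOn_deriv_phi hφ)).div hφ1
      fun r hr => (hφ.1 r hr).ne'
  exact (((contDiffOn_const.mul ((contDiffOn_id.pow 2).add ((contDiffOn_const.mul hw).mul h1))).add
    ((contDiffOn_const.mul hw).mul h2)).add ((contDiffOn_const.mul hw).mul h3)).sub hq

lemma betaPhi_near (hφ : IsPhiMu μ 0 φ) (hn : 3 ≤ n) (hμn : 2 * μ < (n : ℝ) - 2) {r : ℝ}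
    (hr : r ∈ Ioo (0 : ℝ) (3 / 4)) :
    betaPhi n μ 1 φ r = 1 / n + (2 * μ + 2) / (4 * (n + 2)) * r ^ 2 := by
  have hn' : (3 : ℝ) ≤ n := by exact_mod_cast hn
  have hn0 : (n : ℝ) ≠ 0 := by linarith
  have hn2 : (n : ℝ) + 2 ≠ 0 := by linarith
  have hr0 := hr.1
  have hrn : (0 : ℝ) < r ^ (n : ℝ) := Real.rpow_pos_of_pos hr0 _
  have e : r ^ ((n : ℝ) - 2) * r ^ 2 = r ^ (n : ℝ) := by
    rw [← Real.rpow_two, ← Real.rpow_add hr0]; congr 1; ring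
  have e2 : r ^ ((n : ℝ) - 1 + 2 + 1) = r ^ (n : ℝ) * r ^ 2 := by
    rw [← Real.rpow_two, ← Real.rpow_add hr0]; congr 1; ring
  unfold betaPhi
  rw [(phi_sq_facts hφ hn hμn 1 (by norm_num)).2.1 r hr,
    (phi_sq_facts hφ hn hμn 3 (by norm_num)).2.1 r hr, (deriv_phi_sq_facts hφ hn hμn).2.1 r hr,
    deriv_phi_near hφ hr, hφ.2.2.1 r hr, e, e2, show (n : ℝ) - 3 + 2 + 1 = n by ring,
    show (n : ℝ) - 1 + 2 + 1 = n + 2 by ring, show (n : ℝ) - 1 + 1 = n by ring]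
  field_simp
  ring

lemma betaPhi_far (hφ : IsPhiMu μ 0 φ) (hn : 3 ≤ n) (hμn : 2 * μ < (n : ℝ) - 2) :
    ∃ c₁ c₂ : ℝ, ∀ r > (1 : ℝ), betaPhi n μ 1 φ r = c₁ + c₂ * r ^ (2 * μ - n + 2) := by
  obtain ⟨K₁, h₁⟩ := (phi_sq_facts hφ hn hμn 1 (by norm_num)).2.2
  obtain ⟨K₂, h₂⟩ := (phi_sq_facts hφ hn hμn 3 (by norm_num)).2.2
  obtain ⟨K₃, h₃⟩ := (deriv_phi_sq_facts hφ hn hμn).2.2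
  obtain ⟨p, hp⟩ : ∃ p : ℝ, p = (n : ℝ) - 2 - 2 * μ := ⟨_, rfl⟩
  have hp0 : 0 < p := by linarith
  refine ⟨n / p + μ ^ 2 / p + μ, -(p + 2) * K₁ / 4 + n * K₂ + K₃, fun r hr => ?_⟩
  have hr0 : (0 : ℝ) < r := by linarith
  have hrp : (0 : ℝ) < r ^ p := Real.rpow_pos_of_pos hr0 _
  have e : r ^ ((n : ℝ) - 2) * φ r ^ 2 = r ^ p := by
    rw [phi_far hφ hr, ← Real.rpow_natCast (r ^ _), ← Real.rpow_mul hr0.le, ← Real.rpow_add hr0]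
    congr 1
    push_cast
    linarith
  have e2 : r ^ (p + 2) = r ^ p * r ^ 2 := by
    rw [← Real.rpow_two, ← Real.rpow_add hr0]
  have eq : 1 * r * deriv φ r / φ r = -μ := by
    rw [deriv_phi_far hφ hr, phi_far hφ hr, Real.rpow_sub_one hr0.ne']
    have := (Real.rpow_pos_of_pos hr0 (-μ)).ne'
    field_simp
  unfold betaPhi
  rw [h₁ r hr, h₂ r hr, h₃ r hr, e, eq, show (n : ℝ) - 1 - 2 * μ + 1 = p + 2 by linarith,
    show (n : ℝ) - 3 - 2 * μ + 1 = p by linarith, e2, show 2 * μ - n + 2 = -p by linarith,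
    show 2 * μ - n = -(p + 2) by linarith, Real.rpow_neg hr0.le]
  have hp2 : p + 2 ≠ 0 := by linarith
  field_simp
  ring

/-! ### Expanding the formula for `γ` -/

lemma gammaOf_formula (hφ : IsPhiMu μ 0 φ) (hn : 3 ≤ n) {β : ℝ → ℝ}
    (hβ : ContDiffOn ℝ 1 β (Ioi 0)) {r : ℝ} (hr : 0 < r) :
    gammaOf n 1 φ β r = ((n : ℝ) - 1)⁻¹ * (-((n : ℝ) - 2) - 2 * (r * deriv φ r / φ r) +
      ((n : ℝ) - 1) * β r * (r * deriv φ r / φ r) + (r * deriv β r) * (r * deriv φ r / φ r) +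
      β r * (r ^ 2 * deriv (deriv φ) r / φ r) - β r) := by
  have hn' : (3 : ℝ) ≤ n := by exact_mod_cast hn
  have hn1 : (n : ℝ) - 1 ≠ 0 := by linarith
  have hmem : Ioi (0 : ℝ) ∈ 𝓝 r := Ioi_mem_nhds hr
  have dφ : HasDerivAt φ (deriv φ r) r :=
    (((contDiffOn_phi hφ).contDiffAt hmem).differentiableAt (by norm_num)).hasDerivAt
  have dφ' : HasDerivAt (deriv φ) (deriv (deriv φ) r) r :=
    (((contDiffOn_deriv_phi hφ).contDiffAt hmem).differentiableAt (by norm_num)).hasDerivAt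
  have dβ : HasDerivAt β (deriv β r) r :=
    ((hβ.contDiffAt hmem).differentiableAt (by norm_num)).hasDerivAt
  have dr : ∀ a : ℝ, HasDerivAt (fun s : ℝ => s ^ a) (a * r ^ (a - 1)) r := fun a =>
    Real.hasDerivAt_rpow_const (Or.inl hr.ne')
  have d1 : deriv (fun s => s ^ ((n : ℝ) - 2) * (φ s) ^ 2) r = _ :=
    ((dr ((n : ℝ) - 2)).fun_mul (dφ.fun_pow 2)).deriv
  have d2 : deriv (fun s => s ^ ((n : ℝ) - 1) * β s * deriv φ s) r = _ :=
    (((dr ((n : ℝ) - 1)).fun_mul dβ).fun_mul dφ').deriv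
  have hφr := (hφ.1 r hr).ne'
  obtain ⟨P, hP⟩ : ∃ P : ℝ, P = r ^ ((n : ℝ) - 1) := ⟨_, rfl⟩
  have hP0 : P ≠ 0 := hP ▸ (Real.rpow_pos_of_pos hr _).ne'
  have e1 : r ^ ((n : ℝ) - 2) = P / r := by
    rw [hP, ← Real.rpow_sub_one hr.ne']; congr 1; ring
  unfold gammaOf
  rw [d1, d2, Real.rpow_sub_one hr.ne' ((n : ℝ) - 2), Real.rpow_sub_one hr.ne' ((n : ℝ) - 1), e1,
    ← hP]
  have hr' := hr.ne'
  simp only [Nat.cast_ofNat, Nat.add_one_sub_one, pow_one]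
  field_simp
  ring

end


/-! ### Bounds -/

/-- Case `2μ < n-2`: with `α = 1`, `C_μ = 0`, `β_φ(r) = c₁ + c₂ r^{2μ-n+2}`
for large `r`; consequently `β := β_φ` and the corresponding `γ` are bounded on `(0,∞)`. -/
theorem stmt_5 (n : ℕ) (hn : 3 ≤ n) (μ : ℝ) (hμ : 0 ≤ μ) (hμn : 2 * μ < (n : ℝ) - 2)
    (φ : ℝ → ℝ) (hφ : IsPhiMu μ 0 φ) :
    (∃ c₁ c₂ : ℝ, ∀ r : ℝ, 3 / 2 ≤ r →
      betaPhi n μ 1 φ r = c₁ + c₂ * r ^ (2 * μ - n + 2)) ∧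
    (∃ M : ℝ, ∀ r > (0:ℝ), |betaPhi n μ 1 φ r| ≤ M) ∧
    (∃ M : ℝ, ∀ r > (0:ℝ), |gammaOf n 1 φ (betaPhi n μ 1 φ) r| ≤ M) := by
  have hn' : (3 : ℝ) ≤ n := by exact_mod_cast hn
  obtain ⟨c₁, c₂, hfar⟩ := betaPhi_far hφ hn hμn
  have hnear := fun r hr => betaPhi_near (r := r) hφ hn hμn hr
  have hβ := contDiffOn_betaPhi hφ hn hμn
  set β := betaPhi n μ 1 φ with hβdef
  set k : ℝ := (2 * μ + 2) / (4 * (n + 2)) with hk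
  set e : ℝ := 2 * μ - n + 2 with he
  have he0 : e ≤ 0 := by linarith
  -- The decaying power `r^e`, `e < 0`, is at most `1` for `r > 1`.
  have hpow : ∀ r > (1 : ℝ), |r ^ e| ≤ 1 := fun r hr => by
    rw [abs_of_pos (Real.rpow_pos_of_pos (by linarith) _)]
    exact Real.rpow_le_one_of_one_le_of_nonpos hr.le he0
  have hsq : ∀ r ∈ Ioo (0 : ℝ) (3 / 4), |r ^ 2| ≤ 1 := fun r hr => by
    rw [abs_of_nonneg (sq_nonneg r)]
    nlinarith [hr.1, hr.2]
  have hβb : ∃ M : ℝ, ∀ r > (0 : ℝ), |β r| ≤ M := by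
    refine bounded_of_ends β hβ.continuousOn (|1 / (n : ℝ)| + |k| * 1) (|c₁| + |c₂| * 1) ?_ ?_
    · intro r hr
      rw [hnear r hr]
      refine (abs_add_le _ _).trans ?_
      rw [abs_mul]
      gcongr
      exact hsq r hr
    · intro r hr
      rw [hfar r (by linarith)]
      refine (abs_add_le _ _).trans ?_
      rw [abs_mul]
      gcongr
      exact hpow r (by linarith)
  have hdb : ∃ M : ℝ, ∀ r > (0 : ℝ), |r * deriv β r| ≤ M := by
    refine bounded_of_ends (fun r => r * deriv β r)
      (continuousOn_id.mul (hβ.continuousOn_deriv_of_isOpen isOpen_Ioi (by norm_num)))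
      (|2 * k| * 1) (|c₂ * e| * 1) ?_ ?_
    · intro r hr
      have : β =ᶠ[𝓝 r] fun x => 1 / (n : ℝ) + k * x ^ 2 := by
        filter_upwards [isOpen_Ioo.mem_nhds hr] with x hx using hnear x hx
      have hd : HasDerivAt (fun x : ℝ => 1 / (n : ℝ) + k * x ^ 2) (k * (2 * r)) r := by
        simpa using (((hasDerivAt_id r).fun_pow 2).const_mul k).const_add (1 / (n : ℝ))
      rw [this.deriv_eq, hd.deriv, show r * (k * (2 * r)) = (2 * k) * r ^ 2 by ring, abs_mul]
      gcongr
      exact hsq r hr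
    · intro r hr
      have hr1 : (1 : ℝ) < r := by linarith
      have hr0 : r ≠ 0 := by linarith
      have : β =ᶠ[𝓝 r] fun x => c₁ + c₂ * x ^ e := by
        filter_upwards [Ioi_mem_nhds hr1] with x hx using hfar x hx
      have hd : HasDerivAt (fun x : ℝ => c₁ + c₂ * x ^ e) (c₂ * (e * r ^ (e - 1))) r :=
        ((Real.hasDerivAt_rpow_const (Or.inl hr0)).const_mul c₂).const_add c₁
      rw [this.deriv_eq, hd.deriv, Real.rpow_sub_one hr0,
        show r * (c₂ * (e * (r ^ e / r))) = (c₂ * e) * r ^ e by field_simp, abs_mul]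
      gcongr
      exact hpow r hr1
  have hφc := (contDiffOn_phi hφ).continuousOn
  have hqb : ∃ M : ℝ, ∀ r > (0 : ℝ), |r * deriv φ r / φ r| ≤ M := by
    refine bounded_of_ends (fun r => r * deriv φ r / φ r)
      ((continuousOn_id.mul (contDiffOn_deriv_phi hφ).continuousOn).div hφc
        fun r hr => (hφ.1 r hr).ne') 1 |μ| ?_ ?_
    · intro r hr
      rw [deriv_phi_near hφ hr, hφ.2.2.1 r hr, mul_one, div_self hr.1.ne', abs_one]
    · intro r hr
      have hr1 : (1 : ℝ) < r := by linarith
      have hr0 : (0 : ℝ) < r := by linarith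
      have hne := (Real.rpow_pos_of_pos hr0 (-μ)).ne'
      rw [deriv_phi_far hφ hr1, phi_far hφ hr1, Real.rpow_sub_one hr0.ne',
        show r * (-μ * (r ^ (-μ) / r)) / r ^ (-μ) = -μ by field_simp, abs_neg]
  have hsb : ∃ M : ℝ, ∀ r > (0 : ℝ), |r ^ 2 * deriv (deriv φ) r / φ r| ≤ M := by
    refine bounded_of_ends (fun r => r ^ 2 * deriv (deriv φ) r / φ r)
      (((continuousOn_id.pow 2).mul ((contDiffOn_deriv_phi hφ).continuousOn_deriv_of_isOpen
        isOpen_Ioi (by norm_num))).div hφc fun r hr => (hφ.1 r hr).ne') 0 |μ * (μ + 1)| ?_ ?_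
    · intro r hr
      simp [deriv2_phi_near hφ hr]
    · intro r hr
      have hr1 : (1 : ℝ) < r := by linarith
      have hr0 : (0 : ℝ) < r := by linarith
      have hne := (Real.rpow_pos_of_pos hr0 (-μ)).ne'
      rw [deriv2_phi_far hφ hr1, phi_far hφ hr1, Real.rpow_sub hr0, Real.rpow_two,
        show r ^ 2 * (μ * (μ + 1) * (r ^ (-μ) / r ^ 2)) / r ^ (-μ) = μ * (μ + 1) by field_simp]
  refine ⟨⟨c₁, c₂, fun r hr => hfar r (by linarith)⟩, hβb, ?_⟩
  obtain ⟨B, hB⟩ := hβb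
  obtain ⟨D, hD⟩ := hdb
  obtain ⟨Q, hQ⟩ := hqb
  obtain ⟨S, hS⟩ := hsb
  have hN : (0 : ℝ) < (n : ℝ) - 1 := by linarith
  refine ⟨((n : ℝ) - 1)⁻¹ * (|(n : ℝ) - 2| + 2 * Q + ((n : ℝ) - 1) * B * Q + D * Q + B * S + B),
    fun r hr => ?_⟩
  have b := hB r hr
  have d := hD r hr
  have q := hQ r hr
  have s := hS r hr
  rw [gammaOf_formula hφ hn hβ hr, abs_mul, abs_of_pos (inv_pos.2 hN)]
  generalize r * deriv φ r / φ r = x at *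
  generalize r ^ 2 * deriv (deriv φ) r / φ r = y at *
  generalize r * deriv β r = z at *
  generalize β r = w at *
  have hB0 : 0 ≤ B := (abs_nonneg _).trans b
  have hD0 : 0 ≤ D := (abs_nonneg _).trans d
  have t1 : |2 * x| ≤ 2 * Q := by rw [abs_mul, abs_two]; gcongr
  have t2 : |((n : ℝ) - 1) * w * x| ≤ ((n : ℝ) - 1) * B * Q := by
    rw [abs_mul, abs_mul, abs_of_pos hN]; gcongr
  have t3 : |z * x| ≤ D * Q := by rw [abs_mul]; gcongr
  have t4 : |w * y| ≤ B * S := by rw [abs_mul]; gcongr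
  refine mul_le_mul_of_nonneg_left ?_ (inv_pos.2 hN).le
  have t0 := le_refl |(n : ℝ) - 2|
  rw [abs_le] at *
  constructor <;> linarith [t1.1, t1.2, t2.1, t2.2, t3.1, t3.2, t4.1, t4.2, b.1, b.2,
    le_abs_self ((n : ℝ) - 2), neg_abs_le ((n : ℝ) - 2)]
end
end

section
/- Let n ≥ 2, let μ satisfy n−2 < 2μ < n, let C_μ ≥ 0, and let φ = φ_μ. Then the integral D := ∫₀^∞ (φ(s)² − s^{−2μ}) s^{n−1} ds converges and satisfies D ≥ −1/(n−2μ) + 2C_μ/(2μ−n+2). In particular, D > 0 whenever C_μ > (2μ−n+2)/(2(n−2μ)). -/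
/-!
The integral is split at `s = 1`. On `(0, 1]` the integrand is `φ² s^(n-1) - s^(n-1-2μ)`: the first
term is nonnegative and integrable (`φ` is bounded there), and the second one has integral
`1 / (n - 2μ)` since `n - 1 - 2μ > -1`. On `(1, ∞)` the terms `s^(-2μ)` cancel, and what remains is
`2 C s^(n-3-2μ) + C² s^(n-5-2μ)`, which is integrable because `n - 3 - 2μ < -1`; its first term
contributes `2 C / (2μ - n + 2)`, and the second one is nonnegative. The positivity claim is the
positivity of this lower bound.
-/

open MeasureTheory
open scoped BigOperators

noncomputable section

lemma integrableOn_rpow_Ioc {a : ℝ} (ha : -1 < a) :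
    IntegrableOn (fun s : ℝ => s ^ a) (Set.Ioc 0 1) :=
  (intervalIntegrable_iff_integrableOn_Ioc_of_le zero_le_one).1
    (intervalIntegral.intervalIntegrable_rpow' ha)

lemma integral_rpow_Ioc {a : ℝ} (ha : -1 < a) :
    ∫ s in Set.Ioc (0 : ℝ) 1, s ^ a = 1 / (a + 1) := by
  rw [← intervalIntegral.integral_of_le zero_le_one, integral_rpow (Or.inl ha), Real.one_rpow,
    Real.zero_rpow (by linarith), sub_zero]

/-- Near `0` one has `φ² s^k = s^(k+2)`, while on `[1/2, 1]` the function is continuous. -/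
lemma integrableOn_phi_sq {μ C : ℝ} {φ : ℝ → ℝ} (hφ : IsPhiMu μ C φ) {k : ℝ} (hk : 0 ≤ k) :
    IntegrableOn (fun s => φ s ^ 2 * s ^ k) (Set.Ioc 0 1) := by
  obtain ⟨-, hsm, hlin, -⟩ := hφ
  rw [← Set.Ioc_union_Ioc_eq_Ioc (by norm_num : (0 : ℝ) ≤ 1 / 2) (by norm_num : (1 / 2 : ℝ) ≤ 1)]
  refine IntegrableOn.union ?_ ?_
  · have h : ContinuousOn (fun s : ℝ => s ^ 2 * s ^ k) (Set.Icc 0 (1 / 2)) :=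
      ((continuous_id.pow 2).mul (Real.continuous_rpow_const hk)).continuousOn
    refine (h.integrableOn_Icc.mono_set Set.Ioc_subset_Icc_self).congr_fun ?_ measurableSet_Ioc
    intro s hs
    simp only [hlin s ⟨hs.1, by linarith [hs.2]⟩]
  · have h : ContinuousOn (fun s : ℝ => φ s ^ 2 * s ^ k) (Set.Icc (1 / 2) 1) := by
      refine ContinuousOn.mul (ContinuousOn.pow (hsm.continuousOn.mono ?_) 2)
        (Real.continuous_rpow_const hk).continuousOn
      intro s hs
      exact lt_of_lt_of_le (by norm_num) hs.1
    exact h.integrableOn_Icc.mono_set Set.Ioc_subset_Icc_self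

/-- The part over `(0, 1]` loses at most `∫₀¹ s^(n-1-2μ) ds`. -/
lemma near_part {n μ C : ℝ} (hn : 2 ≤ n) (h2 : 2 * μ < n) {φ : ℝ → ℝ} (hφ : IsPhiMu μ C φ) :
    IntegrableOn (fun s => (φ s ^ 2 - s ^ (-(2 * μ))) * s ^ (n - 1)) (Set.Ioc 0 1) ∧
    -1 / (n - 2 * μ) ≤
      ∫ s in Set.Ioc (0 : ℝ) 1, (φ s ^ 2 - s ^ (-(2 * μ))) * s ^ (n - 1) := by
  have he : Set.EqOn (fun s => φ s ^ 2 * s ^ (n - 1) - s ^ (n - 1 - 2 * μ))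
      (fun s => (φ s ^ 2 - s ^ (-(2 * μ))) * s ^ (n - 1)) (Set.Ioc 0 1) := by
    intro s hs
    have : s ^ (n - 1 - 2 * μ) = s ^ (-(2 * μ)) * s ^ (n - 1) := by
      rw [← Real.rpow_add hs.1]; congr 1; ring
    simp only [this]; ring
  have ha : -1 < n - 1 - 2 * μ := by linarith
  have i1 := integrableOn_phi_sq hφ (by linarith : 0 ≤ n - 1)
  have i2 := integrableOn_rpow_Ioc ha
  refine ⟨IntegrableOn.congr_fun (i1.sub i2) he measurableSet_Ioc, ?_⟩
  rw [← setIntegral_congr_fun measurableSet_Ioc he, integral_sub i1 i2, integral_rpow_Ioc ha,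
    show n - 1 - 2 * μ + 1 = n - 2 * μ by ring, neg_div]
  have : 0 ≤ ∫ s in Set.Ioc (0 : ℝ) 1, φ s ^ 2 * s ^ (n - 1) :=
    setIntegral_nonneg measurableSet_Ioc
      fun s hs => mul_nonneg (sq_nonneg _) (Real.rpow_nonneg hs.1.le _)
  linarith

/-- Past `1` the integrand is `2 C s^(n-3-2μ)` plus a nonnegative term. -/
lemma far_part {n μ C : ℝ} (h1 : n - 2 < 2 * μ) {φ : ℝ → ℝ} (hφ : IsPhiMu μ C φ) :
    IntegrableOn (fun s => (φ s ^ 2 - s ^ (-(2 * μ))) * s ^ (n - 1)) (Set.Ioi 1) ∧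
    2 * C / (2 * μ - n + 2) ≤
      ∫ s in Set.Ioi (1 : ℝ), (φ s ^ 2 - s ^ (-(2 * μ))) * s ^ (n - 1) := by
  have he : Set.EqOn (fun s => 2 * C * s ^ (n - 3 - 2 * μ) + C ^ 2 * s ^ (n - 5 - 2 * μ))
      (fun s => (φ s ^ 2 - s ^ (-(2 * μ))) * s ^ (n - 1)) (Set.Ioi 1) := by
    intro s hs
    have hs0 : (0 : ℝ) < s := zero_lt_one.trans hs
    have e0 : s ^ (-(2 * μ)) = s ^ (-μ) * s ^ (-μ) := by
      rw [← Real.rpow_add hs0]; congr 1; ring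
    have e1 : s ^ (n - 3 - 2 * μ) = s ^ (-μ) * s ^ (-μ - 2) * s ^ (n - 1) := by
      rw [← Real.rpow_add hs0, ← Real.rpow_add hs0]; congr 1; ring
    have e2 : s ^ (n - 5 - 2 * μ) = s ^ (-μ - 2) * s ^ (-μ - 2) * s ^ (n - 1) := by
      rw [← Real.rpow_add hs0, ← Real.rpow_add hs0]; congr 1; ring
    simp only [hφ.2.2.2 s hs, e0, e1, e2]; ring
  have ha : n - 3 - 2 * μ < -1 := by linarith
  have i1 := (integrableOn_Ioi_rpow_of_lt ha zero_lt_one).const_mul (2 * C)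
  have i2 := (integrableOn_Ioi_rpow_of_lt
    (by linarith : n - 5 - 2 * μ < -1) zero_lt_one).const_mul (C ^ 2)
  refine ⟨IntegrableOn.congr_fun (i1.add i2) he measurableSet_Ioi, ?_⟩
  rw [← setIntegral_congr_fun measurableSet_Ioi he, integral_add i1 i2, integral_const_mul,
    integral_Ioi_rpow_of_lt ha zero_lt_one, Real.one_rpow]
  have : 0 ≤ ∫ s in Set.Ioi (1 : ℝ), C ^ 2 * s ^ (n - 5 - 2 * μ) :=
    setIntegral_nonneg measurableSet_Ioi fun s hs =>
      mul_nonneg (sq_nonneg _) (Real.rpow_nonneg (zero_lt_one.trans hs).le _)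
  have e : 2 * C * (-1 / (n - 3 - 2 * μ + 1)) = 2 * C / (2 * μ - n + 2) := by
    rw [show n - 3 - 2 * μ + 1 = -(2 * μ - n + 2) by ring, neg_div_neg_eq, mul_one_div]
  linarith

/-- for `n-2 < 2μ < n` the integral
`D = ∫₀^∞ (φ² - s^{-2μ}) s^{n-1} ds` converges and
`D ≥ -1/(n-2μ) + 2C_μ/(2μ-n+2)`; in particular `D > 0` for `C_μ` large. -/
theorem stmt_6 (n : ℕ) (hn : 2 ≤ n) (μ : ℝ) (h1 : (n : ℝ) - 2 < 2 * μ) (h2 : 2 * μ < n)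
    (Cμ : ℝ) (hCμ : 0 ≤ Cμ) (φ : ℝ → ℝ) (hφ : IsPhiMu μ Cμ φ) :
    IntegrableOn (fun s => ((φ s) ^ 2 - s ^ (-(2 * μ))) * s ^ ((n : ℝ) - 1)) (Set.Ioi 0) ∧
    -1 / ((n : ℝ) - 2 * μ) + 2 * Cμ / (2 * μ - n + 2) ≤
      ∫ s in Set.Ioi (0 : ℝ), ((φ s) ^ 2 - s ^ (-(2 * μ))) * s ^ ((n : ℝ) - 1) ∧
    (Cμ > (2 * μ - n + 2) / (2 * ((n : ℝ) - 2 * μ)) →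
      0 < ∫ s in Set.Ioi (0 : ℝ), ((φ s) ^ 2 - s ^ (-(2 * μ))) * s ^ ((n : ℝ) - 1)) := by
  have hn' : (2 : ℝ) ≤ n := by exact_mod_cast hn
  obtain ⟨i1, b1⟩ := near_part hn' h2 hφ
  obtain ⟨i2, b2⟩ := far_part h1 hφ
  have hb : -1 / ((n : ℝ) - 2 * μ) + 2 * Cμ / (2 * μ - n + 2) ≤
      ∫ s in Set.Ioi (0 : ℝ), ((φ s) ^ 2 - s ^ (-(2 * μ))) * s ^ ((n : ℝ) - 1) := by
    rw [← Set.Ioc_union_Ioi_eq_Ioi (zero_le_one : (0 : ℝ) ≤ 1),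
      setIntegral_union (Set.Ioc_disjoint_Ioi le_rfl) measurableSet_Ioi i1 i2]
    exact add_le_add b1 b2
  refine ⟨?_, hb, fun hC => lt_of_lt_of_le ?_ hb⟩
  · rw [← Set.Ioc_union_Ioi_eq_Ioi (zero_le_one : (0 : ℝ) ≤ 1)]
    exact i1.union i2
  · have p : 0 < (n : ℝ) - 2 * μ := by linarith
    have q : 0 < 2 * μ - n + 2 := by linarith
    have hC' := (div_lt_iff₀ (by positivity)).1 hC
    have : 1 / ((n : ℝ) - 2 * μ) < 2 * Cμ / (2 * μ - n + 2) := by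
      rw [div_lt_div_iff₀ p q]; linarith
    rw [neg_div]; linarith
end
end

section
/- Let n ≥ 2 and let μ satisfy n−2 < 2μ < n. There exist a constant C_μ ≥ 0 and a function φ = φ_μ such that, with D := ∫₀^∞ (φ(s)² − s^{−2μ}) s^{n−1} ds, E := ∫₀^∞ φ(s)² s^{n−3} ds, F := ∫₀^∞ φ'(s)² s^{n−1} ds, one has D > 0, and setting α := (n−2μ)D/(4(nE+F)) > 0 (so that −((n−2μ)/4)D + α(nE+F) = 0), the function β := β_φ is bounded on (0,∞), and the function γ : (0,∞) → ℝ defined pointwise by solving (ODE2) for γ (with this β and φ) is bounded on (0,∞). -/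
open MeasureTheory
open scoped BigOperators

noncomputable section

/-!
Take `φ` smooth with `φ = r` near `0` and `φ = r^{-μ} + C r^{-μ-2}` near infinity, where
`C = (2μ+2-n)/(n-2μ)`, large enough for `D > 0` (`IsPhiMu.mass_pos`).

With `q = r φ'/φ`, `p = r² φ''/φ` and the weight `P = r^{n-2} φ²`, write `β = b - α q`. Then
`r P' = (n - 2 + 2q) P`, and `b` satisfies the first-order equation
`r b' = r² (q + μ)/2 + n α + α q² - (n - 2 + 2q) b` (`IsPhiMu.hasDerivAt_betaCore`). The functions
`q`, `p` and `r² (q + μ)` are continuous on `(0,∞)` and explicit near `0` and infinity, hence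
bounded. So once `b` is known to be bounded, `β` and `r β'` are bounded too, and
`(n-1) γ = (r β') q + β ((n-1) q + p - 1) - α (n - 2 + 2q)` (`IsPhiMu.gammaOf_eq`) is bounded.

Boundedness of `b` is an explicit computation near `0` (`IsPhiMu.betaCore_near`). At infinity `P`
decays like `r^{-ν}` with `ν = 2μ+2-n > 0`, so `b P` has to be `O(r^{-ν})`: the growing terms of
`b P` cancel because `φ² ~ r^{-2μ}`, and the constant term
`-((n-2μ)/4) D + α (n E + F)` vanishes by the choice of `α`. What remains is a combination of tails of
the convergent integrals `D`, `E`, `F`, each `O(r^{-ν})` (`IsPhiMu.betaCore_far`).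
-/

/-! ### Functions bounded on `(0,∞)` -/

/-- Boundedness of a real function on `(0,∞)`. -/
def BddPos (f : ℝ → ℝ) : Prop := ∃ M : ℝ, ∀ r > (0 : ℝ), |f r| ≤ M

lemma BddPos.const (c : ℝ) : BddPos fun _ => c := ⟨|c|, fun _ _ => le_rfl⟩

lemma BddPos.congr {f g : ℝ → ℝ} (hf : BddPos f) (h : ∀ r > 0, g r = f r) : BddPos g := by
  obtain ⟨M, hM⟩ := hf
  exact ⟨M, fun r hr => by rw [h r hr]; exact hM r hr⟩

lemma BddPos.add {f g : ℝ → ℝ} (hf : BddPos f) (hg : BddPos g) : BddPos fun r => f r + g r := by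
  obtain ⟨M, hM⟩ := hf
  obtain ⟨N, hN⟩ := hg
  exact ⟨M + N, fun r hr => (abs_add_le _ _).trans (add_le_add (hM r hr) (hN r hr))⟩

lemma BddPos.mul {f g : ℝ → ℝ} (hf : BddPos f) (hg : BddPos g) : BddPos fun r => f r * g r := by
  obtain ⟨M, hM⟩ := hf
  obtain ⟨N, hN⟩ := hg
  refine ⟨M * N, fun r hr => ?_⟩
  rw [abs_mul]
  exact mul_le_mul (hM r hr) (hN r hr) (abs_nonneg _) ((abs_nonneg _).trans (hM r hr))

lemma BddPos.sub {f g : ℝ → ℝ} (hf : BddPos f) (hg : BddPos g) : BddPos fun r => f r - g r :=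
  (hf.add ((BddPos.const (-1)).mul hg)).congr fun r _ => by ring

lemma BddPos.of_ends {f : ℝ → ℝ} (hc : ContinuousOn f (Set.Ioi 0)) {A B : ℝ}
    (hA : ∀ r, 0 < r → r < 1 / 2 → |f r| ≤ A) (hB : ∀ r, 2 < r → |f r| ≤ B) : BddPos f := by
  obtain ⟨K, hK⟩ := (isCompact_Icc (a := (1 / 2 : ℝ)) (b := 2)).exists_bound_of_continuousOn
    (hc.mono fun x hx => lt_of_lt_of_le (by norm_num) hx.1)
  refine ⟨max A (max B K), fun r hr => ?_⟩
  rcases lt_or_ge r (1 / 2) with h | h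
  · exact (hA r hr h).trans (le_max_left _ _)
  rcases lt_or_ge 2 r with h' | h'
  · exact (hB r h').trans ((le_max_left _ _).trans (le_max_right _ _))
  · exact (hK r ⟨h, h'⟩).trans ((le_max_right _ _).trans (le_max_right _ _))

/-! ### Integrals over subsets of `(0,∞)` -/

lemma integrableOn_Ioi_of_ends {f : ℝ → ℝ} (hc : ContinuousOn f (Set.Ioi 0)) {A B p ν : ℝ}
    (hp : -1 < p) (hν : 0 < ν)
    (hA : ∀ r, 0 < r → r < 1 / 2 → |f r| ≤ A * r ^ p)
    (hB : ∀ r, 2 < r → |f r| ≤ B * r ^ (-ν - 1)) : IntegrableOn f (Set.Ioi 0) := by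
  have hcover : Set.Ioi (0 : ℝ) = Set.Ioo 0 (1 / 2) ∪ (Set.Icc (1 / 2) 2 ∪ Set.Ioi 2) := by
    ext x
    simp only [Set.mem_union, Set.mem_Ioi, Set.mem_Ioo, Set.mem_Icc]
    constructor
    · intro h
      rcases lt_or_ge x (1 / 2) with h1 | h1
      · exact Or.inl ⟨h, h1⟩
      · rcases lt_or_ge 2 x with h2 | h2
        · exact Or.inr (Or.inr h2)
        · exact Or.inr (Or.inl ⟨h1, h2⟩)
    · rintro (h | h | h) <;> [exact h.1; linarith [h.1]; linarith]
  have i1 : IntegrableOn f (Set.Ioo 0 (1 / 2)) := by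
    have : IntegrableOn (fun r : ℝ => A * r ^ p) (Set.Ioo 0 (1 / 2)) :=
      ((intervalIntegral.integrableOn_Ioo_rpow_iff (by norm_num)).2 hp).const_mul A
    refine this.mono' ((hc.mono fun x hx => hx.1).aestronglyMeasurable measurableSet_Ioo) ?_
    exact (ae_restrict_iff' measurableSet_Ioo).2 (.of_forall fun x hx => hA x hx.1 hx.2)
  have i3 : IntegrableOn f (Set.Ioi 2) := by
    have : IntegrableOn (fun r : ℝ => B * r ^ (-ν - 1)) (Set.Ioi 2) :=
      (integrableOn_Ioi_rpow_of_lt (by linarith) (by norm_num)).const_mul B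
    refine this.mono' ((hc.mono (Set.Ioi_subset_Ioi zero_le_two)).aestronglyMeasurable
      measurableSet_Ioi) ?_
    exact (ae_restrict_iff' measurableSet_Ioi).2 (.of_forall fun x hx => hB x hx)
  have i2 : IntegrableOn f (Set.Icc (1 / 2) 2) :=
    (hc.mono fun x hx => lt_of_lt_of_le (by norm_num) hx.1).integrableOn_Icc
  rw [hcover]
  exact i1.union (i2.union i3)

lemma tail_bound {f : ℝ → ℝ} {B ν r : ℝ} (hν : 0 < ν) (hr : 2 < r)
    (hB : ∀ s, 2 < s → |f s| ≤ B * s ^ (-ν - 1)) :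
    |∫ s in Set.Ioi r, f s| ≤ B / ν * r ^ (-ν) := by
  have hr0 : 0 < r := by linarith
  have := norm_integral_le_of_norm_le (μ := volume.restrict (Set.Ioi r)) (f := f)
    ((integrableOn_Ioi_rpow_of_lt (a := -ν - 1) (by linarith) hr0).const_mul B)
    ((ae_restrict_iff' measurableSet_Ioi).2 (.of_forall fun x hx => hB x (hr.trans hx)))
  rw [integral_const_mul, integral_Ioi_rpow_of_lt (by linarith) hr0] at this
  refine this.trans (le_of_eq ?_)
  rw [show -ν - 1 + 1 = -ν by ring]
  field_simp

lemma hasDerivAt_setIntegral {f : ℝ → ℝ} (hc : ContinuousOn f (Set.Ioi 0))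
    (hi : ∀ R, 0 < R → IntegrableOn f (Set.Ioc 0 R)) {r : ℝ} (hr : 0 < r) :
    HasDerivAt (fun x => ∫ s in Set.Ioc 0 x, f s) (f r) r := by
  have h := intervalIntegral.integral_hasDerivAt_right
    ((intervalIntegrable_iff_integrableOn_Ioc_of_le hr.le).2 (hi r hr))
    (hc.stronglyMeasurableAtFilter isOpen_Ioi r hr)
    (hc.continuousAt (Ioi_mem_nhds hr))
  refine h.congr_of_eventuallyEq ?_
  filter_upwards [Ioi_mem_nhds hr] with x hx
  rw [intervalIntegral.integral_of_le (le_of_lt hx)]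

lemma setIntegral_split {f : ℝ → ℝ} (hi : IntegrableOn f (Set.Ioi 0)) {r : ℝ} (hr : 0 < r) :
    ∫ s in Set.Ioc 0 r, f s = (∫ s in Set.Ioi 0, f s) - ∫ s in Set.Ioi r, f s := by
  rw [← Set.Ioc_union_Ioi_eq_Ioi hr.le, setIntegral_union _ measurableSet_Ioi
    (hi.mono_set Set.Ioc_subset_Ioi_self) (hi.mono_set (Set.Ioi_subset_Ioi hr.le))]
  · ring
  · rw [Set.disjoint_left]
    exact fun x hx hx' => absurd hx.2 (not_le.2 hx')

lemma setIntegral_rpow {r a : ℝ} (hr : 0 < r) (ha : -1 < a) :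
    ∫ s in Set.Ioc 0 r, s ^ a = r ^ (a + 1) / (a + 1) := by
  rw [← intervalIntegral.integral_of_le hr.le, integral_rpow (Or.inl ha),
    Real.zero_rpow (by linarith)]
  simp

/-! ### The profile `φ` and its scale-invariant derivatives -/

/-- Interpolate between `r` and `r^{-μ} + C r^{-μ-2}` across `[3/4, 1]` by a smooth transition;
positivity survives since the interpolation is a convex combination. -/
lemma exists_phi {μ C : ℝ} (hC : 0 ≤ C) : ∃ φ, IsPhiMu μ C φ := by
  refine ⟨fun r => (1 - Real.smoothTransition (4 * r - 3)) * r +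
    Real.smoothTransition (4 * r - 3) * (r ^ (-μ) + C * r ^ (-μ - 2)), ?_, ?_, ?_, ?_⟩
  · intro r hr
    have h0 := Real.smoothTransition.nonneg (4 * r - 3)
    have h1 := Real.smoothTransition.le_one (4 * r - 3)
    have hp : 0 < r ^ (-μ) + C * r ^ (-μ - 2) := by positivity
    rcases h0.eq_or_lt with h | h
    · simp only [← h]; linarith
    · have := mul_pos h hp
      have := mul_nonneg (sub_nonneg.2 h1) hr.le
      linarith
  · have hs : ContDiff ℝ (⊤ : ℕ∞) fun r : ℝ => Real.smoothTransition (4 * r - 3) :=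
      Real.smoothTransition.contDiff.comp (by fun_prop)
    have hpow : ∀ a : ℝ, ContDiffOn ℝ (⊤ : ℕ∞) (fun r : ℝ => r ^ a) (Set.Ioi 0) := fun a r hr =>
      (Real.contDiffAt_rpow_const_of_ne (ne_of_gt hr)).contDiffWithinAt
    exact ((contDiff_const.sub hs).mul contDiff_id).contDiffOn.add
      (hs.contDiffOn.mul ((hpow _).add (contDiffOn_const.mul (hpow _))))
  · intro r hr
    have : Real.smoothTransition (4 * r - 3) = 0 :=
      Real.smoothTransition.zero_of_nonpos (by linarith [hr.2])
    simp [this]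
  · intro r hr
    have : Real.smoothTransition (4 * r - 3) = 1 :=
      Real.smoothTransition.one_of_one_le (by linarith)
    simp [this]

/-- The logarithmic derivative `r φ'(r) / φ(r)`; it equals the exponent on a pure power. -/
def logDeg (φ : ℝ → ℝ) (r : ℝ) : ℝ := r * deriv φ r / φ r

/-- The second-order analogue `r² φ''(r) / φ(r)` of `logDeg`. -/
def secDeg (φ : ℝ → ℝ) (r : ℝ) : ℝ := r ^ 2 * deriv (deriv φ) r / φ r

namespace IsPhiMu
variable {μ C : ℝ} {φ : ℝ → ℝ}

lemma cont (h : IsPhiMu μ C φ) : ContinuousOn φ (Set.Ioi 0) := h.2.1.continuousOn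

lemma contDiffOn_deriv (h : IsPhiMu μ C φ) : ContDiffOn ℝ (⊤ : ℕ∞) (deriv φ) (Set.Ioi 0) :=
  h.2.1.deriv_of_isOpen isOpen_Ioi (by simp)

lemma contDiffOn_deriv2 (h : IsPhiMu μ C φ) :
    ContDiffOn ℝ (⊤ : ℕ∞) (deriv (deriv φ)) (Set.Ioi 0) :=
  h.contDiffOn_deriv.deriv_of_isOpen isOpen_Ioi (by simp)

lemma hasDerivAt (h : IsPhiMu μ C φ) {r : ℝ} (hr : 0 < r) : HasDerivAt φ (deriv φ r) r :=
  ((h.2.1.differentiableOn (by simp)).differentiableAt (Ioi_mem_nhds hr)).hasDerivAt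

lemma hasDerivAt_deriv (h : IsPhiMu μ C φ) {r : ℝ} (hr : 0 < r) :
    HasDerivAt (deriv φ) (deriv (deriv φ) r) r :=
  ((h.contDiffOn_deriv.differentiableOn (by simp)).differentiableAt
    (Ioi_mem_nhds hr)).hasDerivAt

lemma deriv_near (h : IsPhiMu μ C φ) {r : ℝ} (hr : 0 < r) (hr' : r < 3 / 4) :
    deriv φ r = 1 := by
  have : φ =ᶠ[nhds r] fun x => x := by
    filter_upwards [Ioo_mem_nhds hr hr'] with x hx using h.2.2.1 x hx
  rw [this.deriv_eq]; simp

lemma deriv2_near (h : IsPhiMu μ C φ) {r : ℝ} (hr : 0 < r) (hr' : r < 3 / 4) :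
    deriv (deriv φ) r = 0 := by
  have : deriv φ =ᶠ[nhds r] fun _ => 1 := by
    filter_upwards [Ioo_mem_nhds hr hr'] with x hx using h.deriv_near hx.1 hx.2
  rw [this.deriv_eq]; simp

lemma deriv_far (h : IsPhiMu μ C φ) {r : ℝ} (hr : 1 < r) :
    deriv φ r = -μ * r ^ (-μ - 1) + C * ((-μ - 2) * r ^ (-μ - 2 - 1)) := by
  have : φ =ᶠ[nhds r] fun x => x ^ (-μ) + C * x ^ (-μ - 2) := by
    filter_upwards [Ioi_mem_nhds hr] with x hx using h.2.2.2 x hx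
  rw [this.deriv_eq]
  have h0 : r ≠ 0 := by linarith
  exact ((Real.hasDerivAt_rpow_const (Or.inl h0)).add
    ((Real.hasDerivAt_rpow_const (Or.inl h0)).const_mul C)).deriv

lemma deriv2_far (h : IsPhiMu μ C φ) {r : ℝ} (hr : 1 < r) :
    deriv (deriv φ) r = -μ * ((-μ - 1) * r ^ (-μ - 1 - 1)) +
      C * ((-μ - 2) * ((-μ - 2 - 1) * r ^ (-μ - 2 - 1 - 1))) := by
  have : deriv φ =ᶠ[nhds r]
      fun x => -μ * x ^ (-μ - 1) + C * ((-μ - 2) * x ^ (-μ - 2 - 1)) := by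
    filter_upwards [Ioi_mem_nhds hr] with x hx using h.deriv_far hx
  rw [this.deriv_eq]
  have h0 : r ≠ 0 := by linarith
  exact (((Real.hasDerivAt_rpow_const (Or.inl h0)).const_mul (-μ)).add
    (((Real.hasDerivAt_rpow_const (Or.inl h0)).const_mul (-μ - 2)).const_mul C)).deriv

lemma eq_far (h : IsPhiMu μ C φ) {r : ℝ} (hr : 1 < r) :
    φ r = r ^ (-μ) * (1 + C / r ^ 2) := by
  have h0 : 0 < r := by linarith
  rw [h.2.2.2 r hr, Real.rpow_sub h0, Real.rpow_two]; ring

lemma logDeg_far (h : IsPhiMu μ C φ) (hC : 0 ≤ C) {r : ℝ} (hr : 1 < r) :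
    logDeg φ r = -μ - 2 * C / (r ^ 2 + C) := by
  have h0 : 0 < r := by linarith
  have hx : 0 < r ^ (-μ) := by positivity
  have : 0 < r ^ 2 + C := by positivity
  rw [logDeg, h.eq_far hr, h.deriv_far hr]
  simp only [Real.rpow_sub h0, Real.rpow_two, Real.rpow_one]
  field_simp
  ring

lemma secDeg_far (h : IsPhiMu μ C φ) (hC : 0 ≤ C) {r : ℝ} (hr : 1 < r) :
    secDeg φ r = (μ * (μ + 1) * r ^ 2 + (μ + 2) * (μ + 3) * C) / (r ^ 2 + C) := by
  have h0 : 0 < r := by linarith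
  have hx : 0 < r ^ (-μ) := by positivity
  have : 0 < r ^ 2 + C := by positivity
  rw [secDeg, h.eq_far hr, h.deriv2_far hr]
  simp only [Real.rpow_sub h0, Real.rpow_two, Real.rpow_one]
  field_simp
  ring

lemma logDeg_near (h : IsPhiMu μ C φ) {r : ℝ} (hr : 0 < r) (hr' : r < 3 / 4) :
    logDeg φ r = 1 := by
  rw [logDeg, h.deriv_near hr hr', h.2.2.1 r ⟨hr, hr'⟩]; field_simp

lemma secDeg_near (h : IsPhiMu μ C φ) {r : ℝ} (hr : 0 < r) (hr' : r < 3 / 4) :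
    secDeg φ r = 0 := by
  rw [secDeg, h.deriv2_near hr hr']; simp

lemma cont_logDeg (h : IsPhiMu μ C φ) : ContinuousOn (logDeg φ) (Set.Ioi 0) :=
  (continuousOn_id.mul h.contDiffOn_deriv.continuousOn).div h.cont fun x hx => (h.1 x hx).ne'

lemma cont_secDeg (h : IsPhiMu μ C φ) : ContinuousOn (secDeg φ) (Set.Ioi 0) :=
  ((continuousOn_id.pow 2).mul h.contDiffOn_deriv2.continuousOn).div h.cont
    fun x hx => (h.1 x hx).ne'

lemma bdd_logDeg (h : IsPhiMu μ C φ) (hC : 0 ≤ C) : BddPos (logDeg φ) := by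
  refine BddPos.of_ends h.cont_logDeg (A := 1) (B := |μ| + 2) ?_ ?_
  · intro r hr hr'
    rw [h.logDeg_near hr (by linarith)]; simp
  · intro r hr
    rw [h.logDeg_far hC (by linarith)]
    have : 0 < r ^ 2 + C := by positivity
    have h1 : 2 * C / (r ^ 2 + C) ≤ 2 := by
      rw [div_le_iff₀ this]; nlinarith
    have h2 : 0 ≤ 2 * C / (r ^ 2 + C) := by positivity
    rw [abs_le]
    constructor <;> cases abs_cases μ <;> linarith

/-- Since `φ = r^{-μ}(1 + C/r²)` at infinity, `logDeg φ` approaches `-μ` at rate `r^{-2}`. This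
controls the only growing term, `r² (logDeg φ + μ)/2`, in the equation for `β`. -/
lemma bdd_sq_mul_logDeg (h : IsPhiMu μ C φ) (hC : 0 ≤ C) :
    BddPos fun r => r ^ 2 * (logDeg φ r + μ) := by
  refine BddPos.of_ends ((continuousOn_id.pow 2).mul (h.cont_logDeg.add continuousOn_const))
    (A := |1 + μ|) (B := 2 * C) ?_ ?_
  · intro r hr hr'
    rw [h.logDeg_near hr (by linarith), abs_mul, abs_of_pos (by positivity : 0 < r ^ 2)]
    exact mul_le_of_le_one_left (abs_nonneg _) (by nlinarith)
  · intro r hr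
    have : 0 < r ^ 2 + C := by positivity
    rw [h.logDeg_far hC (by linarith), show r ^ 2 * (-μ - 2 * C / (r ^ 2 + C) + μ) =
      -(2 * C * r ^ 2 / (r ^ 2 + C)) by ring, abs_neg, abs_of_nonneg (by positivity),
      div_le_iff₀ this]
    nlinarith

lemma bdd_secDeg (h : IsPhiMu μ C φ) (hC : 0 ≤ C) (hμ : 0 < μ) : BddPos (secDeg φ) := by
  refine BddPos.of_ends h.cont_secDeg (A := 0) (B := (μ + 2) * (μ + 3)) ?_ ?_
  · intro r hr hr'
    rw [h.secDeg_near hr (by linarith)]; simp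
  · intro r hr
    have : 0 < r ^ 2 + C := by positivity
    rw [h.secDeg_far hC (by linarith), abs_of_nonneg (by positivity), div_le_iff₀ this]
    nlinarith [mul_pos hμ (by positivity : 0 < r ^ 2), (by positivity : 0 < r ^ 2)]

end IsPhiMu

/-! ### The densities of `D`, `E` and `F` -/

namespace IsPhiMu
variable {n : ℕ} {μ C : ℝ} {φ : ℝ → ℝ}

lemma cont_rpow (a : ℝ) : ContinuousOn (fun s : ℝ => s ^ a) (Set.Ioi 0) := fun _ hs =>
  (Real.continuousAt_rpow_const _ _ (Or.inl (ne_of_gt hs))).continuousWithinAt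

lemma rpow_near {s : ℝ} (hs : 0 < s) (a b : ℝ) (hab : 2 + a = b) : s ^ 2 * s ^ a = s ^ b := by
  rw [← Real.rpow_two, ← Real.rpow_add hs, hab]

lemma rpow_far {s : ℝ} (hs : 0 < s) (a b : ℝ) (hab : -μ * 2 + a = b) :
    (s ^ (-μ)) ^ 2 * s ^ a = s ^ b := by
  rw [← Real.rpow_two, ← Real.rpow_mul hs.le, ← Real.rpow_add hs, hab]

/-- The integrand of `F` is `logDeg φ ^ 2` times the integrand of `E`. -/
lemma gradDensity_eq (h : IsPhiMu μ C φ) {s : ℝ} (hs : 0 < s) :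
    (deriv φ s) ^ 2 * s ^ ((n : ℝ) - 1) = logDeg φ s ^ 2 * ((φ s) ^ 2 * s ^ ((n : ℝ) - 3)) := by
  have := (h.1 s hs).ne'
  rw [← rpow_near hs ((n : ℝ) - 3) (n - 1) (by ring), logDeg]
  field_simp

lemma hardyDensity_far (h : IsPhiMu μ C φ) {s : ℝ} (hs : 1 < s) :
    (φ s) ^ 2 * s ^ ((n : ℝ) - 3) = (1 + C / s ^ 2) ^ 2 * s ^ (-(2 * μ + 2 - n) - 1) := by
  rw [h.eq_far hs, mul_pow, mul_right_comm, rpow_far (by linarith) ((n : ℝ) - 3)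
    (-(2 * μ + 2 - n) - 1) (by ring)]
  ring

lemma massDensity_far (h : IsPhiMu μ C φ) {s : ℝ} (hs : 1 < s) :
    ((φ s) ^ 2 - s ^ (-(2 * μ))) * s ^ ((n : ℝ) - 1) =
      (2 * C + C ^ 2 / s ^ 2) * s ^ (-(2 * μ + 2 - n) - 1) := by
  have h0 : 0 < s := by linarith
  have e1 := h.hardyDensity_far (n := n) hs
  have e2 := rpow_far (μ := μ) h0 ((n : ℝ) - 3) (-(2 * μ + 2 - n) - 1) (by ring)
  have e3 := rpow_far (μ := μ) h0 0 (-(2 * μ)) (by ring)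
  rw [Real.rpow_zero, mul_one] at e3
  rw [← rpow_near h0 ((n : ℝ) - 3) (n - 1) (by ring), ← e3]
  calc _ = s ^ 2 * ((φ s) ^ 2 * s ^ ((n : ℝ) - 3)) -
        s ^ 2 * ((s ^ (-μ)) ^ 2 * s ^ ((n : ℝ) - 3)) := by ring
    _ = _ := by rw [e1, e2]; field_simp; ring

lemma hardyDensity_near (h : IsPhiMu μ C φ) {s : ℝ} (hs : 0 < s) (hs' : s < 3 / 4) :
    (φ s) ^ 2 * s ^ ((n : ℝ) - 3) = s ^ ((n : ℝ) - 1) := by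
  rw [h.2.2.1 s ⟨hs, hs'⟩, rpow_near hs ((n : ℝ) - 3) (n - 1) (by ring)]

lemma hardyDensity_bound (h : IsPhiMu μ C φ) (hC : 0 ≤ C) {s : ℝ} (hs : 2 < s) :
    |(φ s) ^ 2 * s ^ ((n : ℝ) - 3)| ≤ (1 + C) ^ 2 * s ^ (-(2 * μ + 2 - n) - 1) := by
  rw [h.hardyDensity_far (by linarith), abs_of_nonneg (by positivity)]
  have : C / s ^ 2 ≤ C := div_le_self hC (by nlinarith)
  gcongr

lemma massDensity_bound (h : IsPhiMu μ C φ) (hC : 0 ≤ C) {s : ℝ} (hs : 2 < s) :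
    |((φ s) ^ 2 - s ^ (-(2 * μ))) * s ^ ((n : ℝ) - 1)| ≤
      (2 * C + C ^ 2) * s ^ (-(2 * μ + 2 - n) - 1) := by
  rw [h.massDensity_far (by linarith), abs_of_nonneg (by positivity)]
  have : C ^ 2 / s ^ 2 ≤ C ^ 2 := div_le_self (by positivity) (by nlinarith)
  gcongr

lemma gradDensity_bound (h : IsPhiMu μ C φ) (hC : 0 ≤ C) :
    ∃ K, ∀ s, 2 < s → |(deriv φ s) ^ 2 * s ^ ((n : ℝ) - 1)| ≤
      K * s ^ (-(2 * μ + 2 - n) - 1) := by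
  obtain ⟨M, hM⟩ := h.bdd_logDeg hC
  refine ⟨M ^ 2 * (1 + C) ^ 2, fun s hs => ?_⟩
  have hs0 : 0 < s := by linarith
  rw [h.gradDensity_eq hs0, abs_mul, abs_pow, mul_assoc]
  exact mul_le_mul (pow_le_pow_left₀ (abs_nonneg _) (hM s hs0) 2) (h.hardyDensity_bound hC hs)
    (abs_nonneg _) (by positivity)

lemma integrable_hardy (h : IsPhiMu μ C φ) (hC : 0 ≤ C) (hn : 2 ≤ n)
    (h1 : (n : ℝ) - 2 < 2 * μ) :
    IntegrableOn (fun s => (φ s) ^ 2 * s ^ ((n : ℝ) - 3)) (Set.Ioi 0) := by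
  have hn' : (2 : ℝ) ≤ n := by exact_mod_cast hn
  refine integrableOn_Ioi_of_ends ((h.cont.pow 2).mul (cont_rpow _)) (A := 1)
    (p := (n : ℝ) - 1) (ν := 2 * μ + 2 - n) (by linarith) (by linarith) ?_
    fun r hr => h.hardyDensity_bound hC hr
  intro r hr hr'
  rw [h.hardyDensity_near hr (by linarith), one_mul, abs_of_pos (by positivity)]

lemma integrable_grad (h : IsPhiMu μ C φ) (hC : 0 ≤ C) (hn : 2 ≤ n)
    (h1 : (n : ℝ) - 2 < 2 * μ) :
    IntegrableOn (fun s => (deriv φ s) ^ 2 * s ^ ((n : ℝ) - 1)) (Set.Ioi 0) := by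
  have hn' : (2 : ℝ) ≤ n := by exact_mod_cast hn
  obtain ⟨K, hK⟩ := h.gradDensity_bound (n := n) hC
  refine integrableOn_Ioi_of_ends ((h.contDiffOn_deriv.continuousOn.pow 2).mul (cont_rpow _))
    (A := 1) (p := (n : ℝ) - 1) (ν := 2 * μ + 2 - n) (by linarith) (by linarith) ?_ hK
  intro r hr hr'
  rw [h.deriv_near hr (by linarith), one_pow, one_mul, abs_of_pos (by positivity)]

lemma integrable_mass (h : IsPhiMu μ C φ) (hC : 0 ≤ C) (hn : 2 ≤ n)
    (h1 : (n : ℝ) - 2 < 2 * μ) (h2 : 2 * μ < n) :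
    IntegrableOn (fun s => ((φ s) ^ 2 - s ^ (-(2 * μ))) * s ^ ((n : ℝ) - 1)) (Set.Ioi 0) := by
  have hn' : (2 : ℝ) ≤ n := by exact_mod_cast hn
  refine integrableOn_Ioi_of_ends (((h.cont.pow 2).sub (cont_rpow _)).mul (cont_rpow _)) (A := 1)
    (p := -(2 * μ) + ((n : ℝ) - 1)) (ν := 2 * μ + 2 - n) (by linarith) (by linarith) ?_
    fun r hr => h.massDensity_bound hC hr
  intro r hr hr'
  rw [h.2.2.1 r ⟨hr, by linarith⟩, Real.rpow_add hr, one_mul, abs_mul,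
    abs_of_pos (by positivity : 0 < r ^ ((n : ℝ) - 1))]
  refine mul_le_mul_of_nonneg_right ?_ (by positivity)
  have e1 : 1 ≤ r ^ (-(2 * μ)) :=
    Real.one_le_rpow_of_pos_of_le_one_of_nonpos hr (by linarith) (by linarith)
  rw [abs_le]
  constructor <;> nlinarith [sq_nonneg r]

lemma integrable_power {a r : ℝ} (hr : 0 < r) (ha : -1 < a) :
    IntegrableOn (fun s : ℝ => s ^ a) (Set.Ioc 0 r) :=
  (intervalIntegrable_iff_integrableOn_Ioc_of_le hr.le).1
    (intervalIntegral.intervalIntegrable_rpow' ha)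

/-- `φ² s^{n-1}` is not integrable on `(0,∞)`; subtracting `s^{n-1-2μ}` leaves the integrand
of `D`. -/
lemma fullDensity_eq {s : ℝ} (hs : 0 < s) :
    (φ s) ^ 2 * s ^ ((n : ℝ) - 1) = ((φ s) ^ 2 - s ^ (-(2 * μ))) * s ^ ((n : ℝ) - 1) +
      s ^ ((n : ℝ) - 2 * μ - 1) := by
  rw [show (n : ℝ) - 2 * μ - 1 = -(2 * μ) + ((n : ℝ) - 1) by ring, Real.rpow_add hs]
  ring

lemma integrable_full (h : IsPhiMu μ C φ) (hC : 0 ≤ C) (hn : 2 ≤ n)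
    (h1 : (n : ℝ) - 2 < 2 * μ) (h2 : 2 * μ < n) {r : ℝ} (hr : 0 < r) :
    IntegrableOn (fun s => (φ s) ^ 2 * s ^ ((n : ℝ) - 1)) (Set.Ioc 0 r) :=
  (((h.integrable_mass hC hn h1 h2).mono_set Set.Ioc_subset_Ioi_self).add
    (integrable_power hr (by linarith : -1 < (n : ℝ) - 2 * μ - 1))).congr_fun
    (fun _ hs => (fullDensity_eq hs.1).symm) measurableSet_Ioc

lemma integral_full (h : IsPhiMu μ C φ) (hC : 0 ≤ C) (hn : 2 ≤ n)
    (h1 : (n : ℝ) - 2 < 2 * μ) (h2 : 2 * μ < n) {r : ℝ} (hr : 0 < r) :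
    ∫ s in Set.Ioc 0 r, (φ s) ^ 2 * s ^ ((n : ℝ) - 1) =
      (∫ s in Set.Ioc 0 r, ((φ s) ^ 2 - s ^ (-(2 * μ))) * s ^ ((n : ℝ) - 1)) +
        r ^ ((n : ℝ) - 2 * μ) / (n - 2 * μ) := by
  rw [setIntegral_congr_fun measurableSet_Ioc fun s hs => fullDensity_eq (μ := μ) hs.1,
    integral_add ((h.integrable_mass hC hn h1 h2).mono_set Set.Ioc_subset_Ioi_self)
    (integrable_power hr (by linarith : -1 < (n : ℝ) - 2 * μ - 1)),
    setIntegral_rpow hr (by linarith : -1 < (n : ℝ) - 2 * μ - 1), sub_add_cancel]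

/-- `D > 0` for large `C`: the negative part of `D` comes from `(0,1)` and is at least
`-∫₀¹ s^{n-1-2μ} = -1/(n-2μ)`, while `(1,∞)` contributes at least
`∫₁^∞ 2C s^{n-3-2μ} = 2C/(2μ+2-n)`. -/
lemma mass_pos (h : IsPhiMu μ C φ) (hC : 0 ≤ C) (hn : 2 ≤ n)
    (h1 : (n : ℝ) - 2 < 2 * μ) (h2 : 2 * μ < n)
    (hlarge : 1 / (n - 2 * μ) < 2 * C / (2 * μ + 2 - n)) :
    0 < ∫ s in Set.Ioi (0 : ℝ), ((φ s) ^ 2 - s ^ (-(2 * μ))) * s ^ ((n : ℝ) - 1) := by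
  have hi := h.integrable_mass hC hn h1 h2
  have hs := setIntegral_split hi one_pos
  have hful := h.integral_full hC hn h1 h2 one_pos
  have hnn : 0 ≤ ∫ s in Set.Ioc 0 1, (φ s) ^ 2 * s ^ ((n : ℝ) - 1) :=
    setIntegral_nonneg measurableSet_Ioc fun s hs => by
      have := hs.1
      positivity
  rw [Real.one_rpow] at hful
  have ht : 2 * C / (2 * μ + 2 - n) ≤
      ∫ s in Set.Ioi (1 : ℝ), ((φ s) ^ 2 - s ^ (-(2 * μ))) * s ^ ((n : ℝ) - 1) := by
    have e : ∫ s in Set.Ioi (1 : ℝ), 2 * C * s ^ (-(2 * μ + 2 - n) - 1) =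
        2 * C / (2 * μ + 2 - n) := by
      rw [integral_const_mul, integral_Ioi_rpow_of_lt (by linarith) one_pos, Real.one_rpow,
        show -(2 * μ + 2 - (n : ℝ)) - 1 + 1 = -(2 * μ + 2 - n) by ring, neg_div_neg_eq]
      ring
    rw [← e]
    refine setIntegral_mono_on
      ((integrableOn_Ioi_rpow_of_lt (by linarith) one_pos).const_mul _)
      (hi.mono_set (Set.Ioi_subset_Ioi zero_le_one)) measurableSet_Ioi fun s hs => ?_
    have hs0 : (0 : ℝ) < s := lt_trans one_pos hs
    rw [h.massDensity_far hs]
    have : 0 ≤ C ^ 2 / s ^ 2 := by positivity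
    refine mul_le_mul_of_nonneg_right (by linarith) (by positivity)
  linarith

lemma hardy_pos (h : IsPhiMu μ C φ) (hC : 0 ≤ C) (hn : 2 ≤ n)
    (h1 : (n : ℝ) - 2 < 2 * μ) :
    0 < ∫ s in Set.Ioi (0 : ℝ), (φ s) ^ 2 * s ^ ((n : ℝ) - 3) := by
  have hn' : (2 : ℝ) ≤ n := by exact_mod_cast hn
  have e : ∫ s in Set.Ioc (0 : ℝ) (1 / 2), (φ s) ^ 2 * s ^ ((n : ℝ) - 3) =
      (1 / 2 : ℝ) ^ ((n : ℝ) - 1 + 1) / (n - 1 + 1) := by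
    rw [← setIntegral_rpow (by norm_num) (by linarith)]
    exact setIntegral_congr_fun measurableSet_Ioc fun s hs =>
      h.hardyDensity_near hs.1 (by linarith [hs.2])
  have hle := setIntegral_mono_set (h.integrable_hardy hC hn h1)
    ((ae_restrict_iff' measurableSet_Ioi).2 (.of_forall fun s (hs : 0 < s) => by
      simp only [Pi.zero_apply]
      positivity))
    (LE.le.eventuallyLE (Set.Ioc_subset_Ioi_self : Set.Ioc (0 : ℝ) (1 / 2) ⊆ Set.Ioi 0))
  rw [e] at hle
  refine lt_of_lt_of_le ?_ hle
  have : (0 : ℝ) < n - 1 + 1 := by linarith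
  positivity

/-! ### The weight `r^{n-2} φ²` and the function `β` -/

lemma weight_near (h : IsPhiMu μ C φ) {r : ℝ} (hr : 0 < r) (hr' : r < 3 / 4) :
    r ^ ((n : ℝ) - 2) * (φ r) ^ 2 = r ^ (n : ℝ) := by
  rw [h.2.2.1 r ⟨hr, hr'⟩, mul_comm, rpow_near hr _ _ (by ring)]

lemma weight_far (h : IsPhiMu μ C φ) {r : ℝ} (hr : 1 < r) :
    r ^ ((n : ℝ) - 2) * (φ r) ^ 2 = (1 + C / r ^ 2) ^ 2 * r ^ (-(2 * μ + 2 - (n : ℝ))) := by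
  rw [h.eq_far hr, mul_pow, mul_comm, mul_right_comm, rpow_far (by linarith) ((n : ℝ) - 2)
    (-(2 * μ + 2 - n)) (by ring)]
  ring

lemma hasDerivAt_weight (h : IsPhiMu μ C φ) {r : ℝ} (hr : 0 < r) :
    HasDerivAt (fun s => s ^ ((n : ℝ) - 2) * (φ s) ^ 2)
      ((n - 2 + 2 * logDeg φ r) * (r ^ ((n : ℝ) - 2) * (φ r) ^ 2) / r) r := by
  have := (h.1 r hr).ne'
  refine ((Real.hasDerivAt_rpow_const (p := (n : ℝ) - 2) (Or.inl hr.ne')).mul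
    ((h.hasDerivAt hr).pow 2)).congr_deriv ?_
  simp only [Pi.pow_apply]
  rw [Real.rpow_sub_one hr.ne', logDeg]
  push_cast
  field_simp

end IsPhiMu

/-- The part of `β_φ` other than `-α r φ'/φ`, that is `β_φ + α * logDeg φ`, with the weight
`r^{n-2} φ²` as common denominator of the three integrals. -/
def betaCore (n : ℕ) (μ α : ℝ) (φ : ℝ → ℝ) (r : ℝ) : ℝ :=
  r ^ 2 / 4 + (r ^ ((n : ℝ) - 2) * (φ r) ^ 2)⁻¹ *
    ((2 * μ - n) / 4 * (∫ s in Set.Ioc (0 : ℝ) r, (φ s) ^ 2 * s ^ ((n : ℝ) - 1)) +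
      n * α * (∫ s in Set.Ioc (0 : ℝ) r, (φ s) ^ 2 * s ^ ((n : ℝ) - 3)) +
      α * ∫ s in Set.Ioc (0 : ℝ) r, (deriv φ s) ^ 2 * s ^ ((n : ℝ) - 1))

/-- The function `r β_φ'(r)`, written as a polynomial in quantities that are bounded on `(0,∞)`. -/
def betaSlope (n : ℕ) (μ α : ℝ) (φ : ℝ → ℝ) (r : ℝ) : ℝ :=
  (1 / 2) * (r ^ 2 * (logDeg φ r + μ)) + n * α + α * logDeg φ r * logDeg φ r -
    ((n : ℝ) - 2 + 2 * logDeg φ r) * betaCore n μ α φ r -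
    α * (secDeg φ r + logDeg φ r - logDeg φ r * logDeg φ r)

lemma betaPhi_eq (n : ℕ) (μ α : ℝ) (φ : ℝ → ℝ) (r : ℝ) :
    betaPhi n μ α φ r = betaCore n μ α φ r - α * logDeg φ r := by
  simp only [betaPhi, betaCore, logDeg]
  ring

namespace IsPhiMu
variable {n : ℕ} {μ C : ℝ} {φ : ℝ → ℝ}

lemma betaCore_near (h : IsPhiMu μ C φ) (hn : 2 ≤ n) (α : ℝ) {r : ℝ} (hr : 0 < r)
    (hr' : r < 1 / 2) :
    betaCore n μ α φ r = (2 * μ + 2) / (4 * (n + 2)) * r ^ 2 + (α + α / n) := by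
  have hn' : (2 : ℝ) ≤ n := by exact_mod_cast hn
  have e1 : ∫ s in Set.Ioc (0 : ℝ) r, (φ s) ^ 2 * s ^ ((n : ℝ) - 1) =
      r ^ (n : ℝ) * r ^ 2 / (n + 2) := by
    rw [mul_comm (r ^ (n : ℝ)), rpow_near hr n (n + 1 + 1) (by ring),
      show (n : ℝ) + 2 = n + 1 + 1 by ring, ← setIntegral_rpow hr (by linarith)]
    refine setIntegral_congr_fun measurableSet_Ioc fun s hs => ?_
    rw [h.2.2.1 s ⟨hs.1, by linarith [hs.2]⟩,
      rpow_near hs.1 ((n : ℝ) - 1) (n + 1) (by ring)]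
  have e2 : ∫ s in Set.Ioc (0 : ℝ) r, s ^ ((n : ℝ) - 1) = r ^ (n : ℝ) / n := by
    rw [setIntegral_rpow hr (by linarith), sub_add_cancel]
  have e3 : ∫ s in Set.Ioc (0 : ℝ) r, (φ s) ^ 2 * s ^ ((n : ℝ) - 3) = r ^ (n : ℝ) / n := by
    rw [← e2]
    exact setIntegral_congr_fun measurableSet_Ioc fun s hs =>
      h.hardyDensity_near hs.1 (by linarith [hs.2])
  have e4 : ∫ s in Set.Ioc (0 : ℝ) r, (deriv φ s) ^ 2 * s ^ ((n : ℝ) - 1) = r ^ (n : ℝ) / n := by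
    rw [← e2]
    refine setIntegral_congr_fun measurableSet_Ioc fun s hs => ?_
    rw [h.deriv_near hs.1 (by linarith [hs.2]), one_pow, one_mul]
  rw [betaCore, e1, e3, e4, h.weight_near hr (by linarith)]
  have : 0 < r ^ (n : ℝ) := by positivity
  field_simp
  ring

/-- Multiply `betaCore` by the weight `P = r^{n-2} φ²`, which is at least `r^{-ν}` with
`ν = 2μ+2-n > 0`. The leading terms `r² P` and `r^{n-2μ}` agree up to `O(r^{-ν})`, the constant
terms cancel by the choice of `α`, and the tails of the integrals `D`, `E`, `F` are `O(r^{-ν})`. -/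
lemma betaCore_far (h : IsPhiMu μ C φ) (hC : 0 ≤ C) (hn : 2 ≤ n)
    (h1 : (n : ℝ) - 2 < 2 * μ) (h2 : 2 * μ < n) {α : ℝ}
    (hα : -(((n : ℝ) - 2 * μ) / 4) *
        (∫ s in Set.Ioi (0 : ℝ), ((φ s) ^ 2 - s ^ (-(2 * μ))) * s ^ ((n : ℝ) - 1)) +
      α * (n * (∫ s in Set.Ioi (0 : ℝ), (φ s) ^ 2 * s ^ ((n : ℝ) - 3)) +
        ∫ s in Set.Ioi (0 : ℝ), (deriv φ s) ^ 2 * s ^ ((n : ℝ) - 1)) = 0) :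
    ∃ B, ∀ r, 2 < r → |betaCore n μ α φ r| ≤ B := by
  obtain ⟨K, hK⟩ := h.gradDensity_bound (n := n) hC
  have hν : 0 < 2 * μ + 2 - n := by linarith
  set ν := 2 * μ + 2 - (n : ℝ) with hνdef
  refine ⟨(2 * C + C ^ 2) / 4 + (n - 2 * μ) / 4 * ((2 * C + C ^ 2) / ν) +
    n * |α| * ((1 + C) ^ 2 / ν) + |α| * (K / ν), fun r hr => ?_⟩
  have hr0 : 0 < r := by linarith
  have tD := tail_bound hν hr fun s hs => h.massDensity_bound (n := n) hC hs
  have tE := tail_bound hν hr fun s hs => h.hardyDensity_bound (n := n) hC hs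
  have tF := tail_bound hν hr hK
  have sD := setIntegral_split (h.integrable_mass hC hn h1 h2) hr0
  have sE := setIntegral_split (h.integrable_hardy hC hn h1) hr0
  have sF := setIntegral_split (h.integrable_grad hC hn h1) hr0
  have sI := h.integral_full hC hn h1 h2 hr0
  have hx : 0 < r ^ (-ν) := by positivity
  have hpow : r ^ ((n : ℝ) - 2 * μ) = r ^ 2 * r ^ (-ν) :=
    (rpow_near hr0 _ _ (by rw [hνdef]; ring)).symm
  have hw := h.weight_far (n := n) (r := r) (by linarith)
  rw [← hνdef] at hw
  set TD := ∫ s in Set.Ioi r, ((φ s) ^ 2 - s ^ (-(2 * μ))) * s ^ ((n : ℝ) - 1)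
  set TE := ∫ s in Set.Ioi r, (φ s) ^ 2 * s ^ ((n : ℝ) - 3)
  set TF := ∫ s in Set.Ioi r, (deriv φ s) ^ 2 * s ^ ((n : ℝ) - 1)
  set P := r ^ ((n : ℝ) - 2) * (φ r) ^ 2
  set x := r ^ (-ν)
  have hxP : x ≤ P := by
    rw [hw]
    have : 0 ≤ C / r ^ 2 := by positivity
    exact le_mul_of_one_le_left hx.le (one_le_pow₀ (by linarith))
  have hP : 0 < P := hx.trans_le hxP
  have hnμ : (n : ℝ) - 2 * μ ≠ 0 := by linarith
  have key : betaCore n μ α φ r * P = (2 * C + C ^ 2 / r ^ 2) / 4 * x +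
      (n - 2 * μ) / 4 * TD - n * α * TE - α * TF := by
    rw [betaCore, sI, sE, sF, sD, hpow]
    change (r ^ 2 / 4 + P⁻¹ * _) * P = _
    -- `P = r^{-ν}(1 + C/r²)²`, expanded to isolate the leading term of `r² P`.
    have hrP : r ^ 2 / 4 * P = r ^ 2 / 4 * x + (2 * C + C ^ 2 / r ^ 2) / 4 * x := by
      rw [hw]; field_simp; ring
    rw [add_mul, mul_right_comm, inv_mul_cancel₀ hP.ne', one_mul, hrP]
    have e : (2 * μ - n) / 4 * (r ^ 2 * x / (n - 2 * μ)) = -(r ^ 2 * x / 4) := by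
      field_simp; ring
    rw [mul_add, e]
    linear_combination hα
  have hc2 : C ^ 2 / r ^ 2 ≤ C ^ 2 := div_le_self (by positivity) (by nlinarith)
  have b1 : |(2 * C + C ^ 2 / r ^ 2) / 4 * x| ≤ (2 * C + C ^ 2) / 4 * x := by
    rw [abs_of_nonneg (by positivity)]
    gcongr
  have b2 : |(n - 2 * μ) / 4 * TD| ≤ (n - 2 * μ) / 4 * ((2 * C + C ^ 2) / ν * x) := by
    have : 0 ≤ (n - 2 * μ) / 4 := by linarith
    rw [abs_mul, abs_of_nonneg this]
    gcongr
  have b3 : |n * α * TE| ≤ n * |α| * ((1 + C) ^ 2 / ν * x) := by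
    rw [abs_mul, abs_mul, Nat.abs_cast]
    gcongr
  have b4 : |α * TF| ≤ |α| * (K / ν * x) := by
    rw [abs_mul]
    gcongr
  have hbP : |betaCore n μ α φ r| * P ≤ ((2 * C + C ^ 2) / 4 +
      (n - 2 * μ) / 4 * ((2 * C + C ^ 2) / ν) + n * |α| * ((1 + C) ^ 2 / ν) + |α| * (K / ν)) * x := by
    have e : |betaCore n μ α φ r| * P = |betaCore n μ α φ r * P| := by
      rw [abs_mul, abs_of_pos hP]
    rw [e, key]
    refine ((abs_sub _ _).trans (add_le_add_left ((abs_sub _ _).trans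
      (add_le_add_left (abs_add_le _ _) _)) _)).trans ?_
    linarith
  refine le_of_mul_le_mul_right ((mul_le_mul_of_nonneg_left hxP (abs_nonneg _)).trans hbP) hx

/-- The first-order linear equation for `betaCore`: differentiating the integrals returns their
integrands, and dividing these by the weight leaves polynomials in `r` and `logDeg φ`. -/
lemma hasDerivAt_betaCore (h : IsPhiMu μ C φ) (hC : 0 ≤ C) (hn : 2 ≤ n)
    (h1 : (n : ℝ) - 2 < 2 * μ) (h2 : 2 * μ < n) (α : ℝ) {r : ℝ} (hr : 0 < r) :
    HasDerivAt (betaCore n μ α φ)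
      (((r ^ 2 * (logDeg φ r + μ)) / 2 + n * α + α * logDeg φ r ^ 2 -
        (n - 2 + 2 * logDeg φ r) * betaCore n μ α φ r) / r) r := by
  have dI := hasDerivAt_setIntegral ((h.cont.pow 2).mul (cont_rpow ((n : ℝ) - 1)))
    (fun R hR => h.integrable_full hC hn h1 h2 hR) hr
  have dE := hasDerivAt_setIntegral ((h.cont.pow 2).mul (cont_rpow ((n : ℝ) - 3)))
    (fun R _ => (h.integrable_hardy hC hn h1).mono_set Set.Ioc_subset_Ioi_self) hr
  have dF := hasDerivAt_setIntegral
    ((h.contDiffOn_deriv.continuousOn.pow 2).mul (cont_rpow ((n : ℝ) - 1)))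
    (fun R _ => (h.integrable_grad hC hn h1).mono_set Set.Ioc_subset_Ioi_self) hr
  have hφ := h.1 r hr
  have hP : 0 < r ^ ((n : ℝ) - 2) * (φ r) ^ 2 := by positivity
  have dP := (h.hasDerivAt_weight (n := n) hr).inv hP.ne'
  have d := (((hasDerivAt_id r).pow 2).div_const 4).add
    (dP.mul (((dI.const_mul ((2 * μ - n) / 4)).add (dE.const_mul (n * α))).add (dF.const_mul α)))
  refine d.congr_deriv ?_
  simp only [Pi.add_apply, Pi.mul_apply, Pi.pow_apply, Pi.inv_apply, id]
  rw [h.gradDensity_eq hr, betaCore]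
  have e1 : r ^ ((n : ℝ) - 1) = r * r ^ ((n : ℝ) - 2) := by
    rw [mul_comm, ← Real.rpow_add_one hr.ne']; congr 1; ring
  have e2 : r ^ ((n : ℝ) - 3) = r ^ ((n : ℝ) - 2) / r := by
    rw [← Real.rpow_sub_one hr.ne']; congr 1; ring
  rw [e1, e2]
  set y := r ^ ((n : ℝ) - 2)
  have hy : 0 < y := by positivity
  generalize logDeg φ r = q
  generalize (∫ s in Set.Ioc (0 : ℝ) r, (φ s) ^ 2 * s ^ ((n : ℝ) - 1)) = I1
  generalize (∫ s in Set.Ioc (0 : ℝ) r, (φ s) ^ 2 * s ^ ((n : ℝ) - 3)) = I2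
  generalize (∫ s in Set.Ioc (0 : ℝ) r, (deriv φ s) ^ 2 * s ^ ((n : ℝ) - 1)) = I3
  field_simp
  push_cast
  ring

lemma hasDerivAt_logDeg (h : IsPhiMu μ C φ) {r : ℝ} (hr : 0 < r) :
    HasDerivAt (logDeg φ) ((secDeg φ r + logDeg φ r - logDeg φ r ^ 2) / r) r := by
  have hφ := (h.1 r hr).ne'
  refine (((hasDerivAt_id r).mul (h.hasDerivAt_deriv hr)).div (h.hasDerivAt hr) hφ).congr_deriv ?_
  simp only [id, secDeg, logDeg, Pi.mul_apply]
  field_simp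
  ring

lemma hasDerivAt_betaPhi (h : IsPhiMu μ C φ) (hC : 0 ≤ C) (hn : 2 ≤ n)
    (h1 : (n : ℝ) - 2 < 2 * μ) (h2 : 2 * μ < n) (α : ℝ) {r : ℝ} (hr : 0 < r) :
    HasDerivAt (betaPhi n μ α φ) (betaSlope n μ α φ r / r) r := by
  have e : betaPhi n μ α φ = fun r => betaCore n μ α φ r - α * logDeg φ r :=
    funext (betaPhi_eq n μ α φ)
  rw [e]
  refine ((h.hasDerivAt_betaCore hC hn h1 h2 α hr).sub
    ((h.hasDerivAt_logDeg hr).const_mul α)).congr_deriv ?_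
  rw [betaSlope]
  field_simp

/-- After multiplication by `r²/φ`, every term of (ODE2) is a polynomial in the bounded functions
`β`, `r β'`, `r φ'/φ` and `r² φ''/φ`. -/
lemma gammaOf_eq (h : IsPhiMu μ C φ) (hC : 0 ≤ C) (hn : 2 ≤ n)
    (h1 : (n : ℝ) - 2 < 2 * μ) (h2 : 2 * μ < n) (α : ℝ) {r : ℝ} (hr : 0 < r) :
    gammaOf n α φ (betaPhi n μ α φ) r = 1 / ((n : ℝ) - 1) *
      (betaSlope n μ α φ r * logDeg φ r +
        betaPhi n μ α φ r * (((n : ℝ) - 1) * logDeg φ r + secDeg φ r - 1) -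
        α * ((n : ℝ) - 2 + 2 * logDeg φ r)) := by
  have hn' : (0 : ℝ) < n - 1 := by
    have : (2 : ℝ) ≤ n := by exact_mod_cast hn
    linarith
  have hφ := h.1 r hr
  have d := ((Real.hasDerivAt_rpow_const (p := (n : ℝ) - 1) (Or.inl hr.ne')).mul
    (h.hasDerivAt_betaPhi hC hn h1 h2 α hr)).mul (h.hasDerivAt_deriv hr)
  have d' : deriv (fun s => s ^ ((n : ℝ) - 1) * betaPhi n μ α φ s * deriv φ s) r = _ := d.deriv
  rw [gammaOf, d', (h.hasDerivAt_weight hr).deriv]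
  have e1 : r ^ ((n : ℝ) - 1) = r * r ^ ((n : ℝ) - 2) := by
    rw [mul_comm, ← Real.rpow_add_one hr.ne']; congr 1; ring
  rw [show (n : ℝ) - 1 - 1 = n - 2 by ring]
  simp only [Pi.mul_apply]
  rw [e1]
  have hq : deriv φ r = logDeg φ r * φ r / r := by rw [logDeg]; field_simp
  have hs : deriv (deriv φ) r = secDeg φ r * φ r / r ^ 2 := by rw [secDeg]; field_simp
  rw [hq, hs]
  have hy : 0 < r ^ ((n : ℝ) - 2) := by positivity
  generalize r ^ ((n : ℝ) - 2) = y at *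
  generalize logDeg φ r = q
  generalize secDeg φ r = p
  generalize betaPhi n μ α φ r = b
  generalize betaSlope n μ α φ r = t
  generalize φ r = f at *
  field_simp
  ring

end IsPhiMu

/-- Case `n-2 < 2μ < n`: there exist `C_μ ≥ 0` and `φ = φ_μ` with `D > 0`,
such that for `α := (n-2μ)D/(4(nE+F)) > 0` (so `-((n-2μ)/4)D + α(nE+F) = 0`) the
functions `β := β_φ` and the corresponding `γ` are bounded on `(0,∞)`. -/
theorem stmt_8 (n : ℕ) (hn : 2 ≤ n) (μ : ℝ) (h1 : (n : ℝ) - 2 < 2 * μ) (h2 : 2 * μ < n) :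
    ∃ (Cμ : ℝ) (φ : ℝ → ℝ), 0 ≤ Cμ ∧ IsPhiMu μ Cμ φ ∧
      (let D : ℝ := ∫ s in Set.Ioi (0 : ℝ), ((φ s) ^ 2 - s ^ (-(2 * μ))) * s ^ ((n : ℝ) - 1)
       let E : ℝ := ∫ s in Set.Ioi (0 : ℝ), (φ s) ^ 2 * s ^ ((n : ℝ) - 3)
       let F : ℝ := ∫ s in Set.Ioi (0 : ℝ), (deriv φ s) ^ 2 * s ^ ((n : ℝ) - 1)
       let α : ℝ := ((n : ℝ) - 2 * μ) * D / (4 * (n * E + F))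
       0 < D ∧ 0 < α ∧ -(((n : ℝ) - 2 * μ) / 4) * D + α * (n * E + F) = 0 ∧
       (∃ M : ℝ, ∀ r > (0:ℝ), |betaPhi n μ α φ r| ≤ M) ∧
       (∃ M : ℝ, ∀ r > (0:ℝ), |gammaOf n α φ (betaPhi n μ α φ) r| ≤ M)) := by
  have hn' : (2 : ℝ) ≤ n := by exact_mod_cast hn
  have hμ : 0 < μ := by linarith
  have ha : 0 < (n : ℝ) - 2 * μ := by linarith
  have hν : 0 < 2 * μ + 2 - (n : ℝ) := by linarith
  -- `C = ν/(n-2μ)` with `ν = 2μ+2-n` makes `2C/ν` twice the bound `1/(n-2μ)` needed for `D > 0`.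
  have hC : 0 ≤ (2 * μ + 2 - n) / (n - 2 * μ) := by positivity
  obtain ⟨φ, h⟩ := exists_phi (μ := μ) hC
  refine ⟨_, φ, hC, h, ?_⟩
  intro D E F α
  have hD : 0 < D := by
    refine h.mass_pos hC hn h1 h2 ?_
    rw [← mul_div_assoc, div_div, div_lt_div_iff₀ ha (by positivity)]
    nlinarith [mul_pos ha hν]
  have hE : 0 < E := h.hardy_pos hC hn h1
  have hF : 0 ≤ F := setIntegral_nonneg measurableSet_Ioi fun s (hs : 0 < s) => by positivity
  have hEF : 0 < n * E + F := by positivity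
  have hα : 0 < α := by
    change 0 < ((n : ℝ) - 2 * μ) * D / (4 * (n * E + F))
    positivity
  have hbal : -(((n : ℝ) - 2 * μ) / 4) * D + α * (n * E + F) = 0 := by
    change _ + ((n : ℝ) - 2 * μ) * D / (4 * (n * E + F)) * (n * E + F) = 0
    field_simp
    ring
  obtain ⟨B, hB⟩ := h.betaCore_far hC hn h1 h2 hbal
  have bc : BddPos (betaCore n μ α φ) := by
    refine BddPos.of_ends (fun r hr =>
      (h.hasDerivAt_betaCore hC hn h1 h2 α hr).continuousAt.continuousWithinAt)
      (A := (2 * μ + 2) / (4 * (n + 2)) + (α + α / n)) ?_ hB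
    intro r hr hr'
    rw [h.betaCore_near hn α hr hr', abs_of_nonneg (by positivity)]
    have : (2 * μ + 2) / (4 * (n + 2)) * r ^ 2 ≤ (2 * μ + 2) / (4 * (n + 2)) :=
      mul_le_of_le_one_right (by positivity) (by nlinarith)
    linarith
  have bq := h.bdd_logDeg hC
  have bp := h.bdd_secDeg hC hμ
  have bt := h.bdd_sq_mul_logDeg hC
  have bβ : BddPos (betaPhi n μ α φ) :=
    (bc.sub ((BddPos.const α).mul bq)).congr fun r _ => betaPhi_eq n μ α φ r
  have bw : BddPos fun r => (n : ℝ) - 2 + 2 * logDeg φ r :=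
    (BddPos.const _).add ((BddPos.const 2).mul bq)
  have bs : BddPos (betaSlope n μ α φ) :=
    ((((((BddPos.const _).mul bt).add (BddPos.const _)).add
      (((BddPos.const α).mul bq).mul bq)).sub (bw.mul bc)).sub
      ((BddPos.const α).mul ((bp.add bq).sub (bq.mul bq))))
  refine ⟨hD, hα, hbal, bβ, ?_⟩
  exact ((BddPos.const _).mul (((bs.mul bq).add
    (bβ.mul ((((BddPos.const _).mul bq).add bp).sub (BddPos.const 1)))).sub
    ((BddPos.const α).mul bw))).congr fun r hr => h.gammaOf_eq hC hn h1 h2 α hr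
end
end
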